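/- arXiv:1006.3049 — 2 statements merged into one kernel-verified Lean document; each statement's English description precedes it below -/
import Mathlib

section
/- Every subgraph G of the n-dimensional hypercube Q_n with minimum degree at least d contains a path of length at least 2^d - 1. -/
/-- The hypercube graph `Q_n` on `{0,1}^n`: two vertices are adjacent iff they
differ in exactly one coordinate (Hamming distance 1). -/
def hypercube (n : ℕ) : SimpleGraph (Fin n → Bool) :=
  SimpleGraph.fromRel (fun x y => hammingDist x y = 1)

open Classical in
/-- degree -/
noncomputable def hdeg {V : Type} [Fintype V] (G : SimpleGraph V) (b : V) : ℕ :=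
  (Finset.univ.filter (fun y => G.Adj b y)).card

/-- `s` is the vertex set of a path from `x` to `y`. -/
def HasP {V : Type} (G : SimpleGraph V) (x y : V) (s : Finset V) : Prop :=
  ∃ p : G.Walk x y, p.IsPath ∧ ∀ z, z ∈ s ↔ z ∈ p.support

namespace HasP

variable {V : Type} {G H : SimpleGraph V} {x y z w : V} {s t : Finset V}

theorem left_mem (h : HasP G x y s) : x ∈ s := by
  obtain ⟨p, _, hs⟩ := h
  exact (hs x).2 p.start_mem_support

theorem right_mem (h : HasP G x y s) : y ∈ s := by
  obtain ⟨p, _, hs⟩ := h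
  exact (hs y).2 p.end_mem_support

theorem single (G : SimpleGraph V) (x : V) : HasP G x x {x} :=
  ⟨SimpleGraph.Walk.nil, SimpleGraph.Walk.IsPath.nil, by simp⟩

theorem eq_single (h : HasP G x x s) : s = {x} := by
  obtain ⟨p, hp, hs⟩ := h
  have := SimpleGraph.Walk.isPath_iff_eq_nil.1 hp
  subst this
  ext z
  simp [hs]

theorem symm (h : HasP G x y s) : HasP G y x s := by
  obtain ⟨p, hp, hs⟩ := h
  exact ⟨p.reverse, hp.reverse, by simpa using hs⟩

theorem mono (hle : G ≤ H) (h : HasP G x y s) : HasP H x y s := by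
  obtain ⟨p, hp, hs⟩ := h
  exact ⟨p.mapLe hle, hp.mapLe hle, by simpa using hs⟩

theorem join [DecidableEq V] (h : HasP G x y s) (h' : HasP G z w t) (ha : G.Adj y z)
    (hd : ∀ a ∈ s, a ∉ t) : HasP G x w (s ∪ t) := by
  obtain ⟨p, hp, hs⟩ := h
  obtain ⟨q, hq, ht⟩ := h'
  refine ⟨p.append (SimpleGraph.Walk.cons ha q), ?_, ?_⟩
  · rw [SimpleGraph.Walk.isPath_def, SimpleGraph.Walk.support_append]
    simp only [SimpleGraph.Walk.support_cons, List.tail_cons]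
    rw [List.nodup_append]
    refine ⟨hp.support_nodup, hq.support_nodup, ?_⟩
    intro a h1 b h2 hab
    subst hab
    exact hd a ((hs a).2 h1) ((ht a).2 h2)
  · intro a
    rw [SimpleGraph.Walk.support_append]
    simp [hs, ht]

theorem join' [DecidableEq V] (h : HasP G x y s) (h' : HasP G y w t)
    (hd : ∀ a ∈ s, a ∈ t → a = y) : HasP G x w (s ∪ t) := by
  obtain ⟨p, hp, hs⟩ := h
  obtain ⟨q, hq, ht⟩ := h'
  cases q with
  | nil =>
    refine ⟨p, hp, fun a => ?_⟩
    simp only [Finset.mem_union, hs, ht]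
    simp
    rintro rfl
    exact p.end_mem_support
  | cons ha q' =>
    rw [SimpleGraph.Walk.cons_isPath_iff] at hq
    have h2 : HasP G x w (s ∪ q'.support.toFinset) := by
      refine join (z := _) ⟨p, hp, hs⟩ ⟨q', hq.1, by simp⟩ ha ?_
      intro a h1 h2
      have h3 : a ∈ q'.support := by simpa using h2
      have := hd a h1 ((ht a).2 (by simp [h3]))
      subst this
      exact hq.2 h3
    obtain ⟨r, hr, hs'⟩ := h2
    refine ⟨r, hr, fun a => ?_⟩
    rw [← hs']
    have hy : y ∈ s := (hs y).2 p.end_mem_support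
    simp only [Finset.mem_union, ht, SimpleGraph.Walk.support_cons, List.mem_cons,
      List.mem_toFinset]
    constructor
    · rintro (h | h | h)
      · exact Or.inl h
      · subst h; exact Or.inl hy
      · exact Or.inr h
    · rintro (h | h)
      · exact Or.inl h
      · exact Or.inr (Or.inr h)

theorem closed {W : Set V} (hW : ∀ a b, a ∈ W → G.Adj a b → b ∈ W)
    (h : HasP G x y s) (hx : x ∈ W) : ∀ a ∈ s, a ∈ W := by
  obtain ⟨p, -, hs⟩ := h
  intro a ha
  have ha := (hs a).1 ha
  clear hs
  induction p with
  | nil => simp at ha; subst ha; exact hx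
  | cons h q ih =>
    simp only [SimpleGraph.Walk.support_cons, List.mem_cons] at ha
    rcases ha with rfl | ha
    · exact hx
    · exact ih (hW _ _ hx h) ha

end HasP

/-- reachable avoiding `b`. -/
def Av {V : Type} (G : SimpleGraph V) (b v r : V) : Prop := ∃ t, HasP G v r t ∧ b ∉ t

theorem Av.of_walk {V : Type} {G : SimpleGraph V} {b v r : V} (p : G.Walk v r)
    (hb : b ∉ p.support) : Av G b v r := by
  classical
  exact ⟨p.bypass.support.toFinset, ⟨p.bypass, p.bypass_isPath, by simp⟩, by
    simpa using fun h => hb (p.support_bypass_subset_support h)⟩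

theorem Av.step {V : Type} {G : SimpleGraph V} {b v r z : V} (h : Av G b v r)
    (ha : G.Adj r z) (hz : z ≠ b) : Av G b v z := by
  obtain ⟨t, ⟨p, hp, ht⟩, hb⟩ := h
  refine Av.of_walk (p.concat ha) ?_
  rw [ht] at hb
  simp [SimpleGraph.Walk.support_concat, hb, Ne.symm hz]

theorem Av.of_initial {V : Type} {G : SimpleGraph V} {b v x : V} {s : Finset V} (h : HasP G v b s)
    (hx : x ∈ s) (hne : x ≠ b) : Av G b v x := by
  classical
  obtain ⟨p, hp, hs⟩ := h
  have hx := (hs x).1 hx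
  exact Av.of_walk (p.takeUntil x hx)
    (SimpleGraph.Walk.endpoint_notMem_support_takeUntil hp hx hne.symm)

theorem reach_step {V : Type} {G : SimpleGraph V} {v r z : V} (h : ∃ t, HasP G v r t)
    (ha : G.Adj r z) : ∃ t, HasP G v z t := by
  classical
  obtain ⟨t, p, hp, ht⟩ := h
  exact ⟨(p.concat ha).bypass.support.toFinset, (p.concat ha).bypass,
    (p.concat ha).bypass_isPath, by simp⟩

/-- Strengthened form: the end of a good path can be taken not to separate. -/
theorem plus_of_base {V : Type} [Fintype V] (G : SimpleGraph V)
    (hA : ∀ H : SimpleGraph V, H ≤ G → ∀ v, ∃ b s, HasP H v b s ∧ 2 ^ hdeg H b ≤ s.card) (v : V) :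
    ∃ b s, HasP G v b s ∧ 2 ^ hdeg G b ≤ s.card ∧
      ∀ r, (∃ t, HasP G v r t) → r ≠ b → Av G b v r := by
  classical
  let F : Finset (V × Finset V) :=
    Finset.univ.filter (fun q => HasP G v q.1 q.2 ∧ 2 ^ hdeg G q.1 ≤ q.2.card)
  have hF : F.Nonempty := by
    obtain ⟨b, s, h1, h2⟩ := hA G le_rfl v
    exact ⟨(b, s), by simp [F, h1, h2]⟩
  obtain ⟨⟨b, s⟩, hbs, hmax⟩ := F.exists_max_image (fun q => q.2.card) hF
  simp only [F, Finset.mem_filter, Finset.mem_univ, true_and] at hbs hmax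
  refine ⟨b, s, hbs.1, hbs.2, ?_⟩
  by_contra hcon
  push Not at hcon
  obtain ⟨r, hr, hrb, hrn⟩ := hcon
  let E : Set V := {z | (∃ t, HasP G v z t) ∧ z ≠ b ∧ ¬ Av G b v z}
  have hE : ∀ z y, z ∈ E → G.Adj z y → y = b ∨ y ∈ E := by
    intro z y hz ha
    by_cases hy : y = b
    · exact Or.inl hy
    · exact Or.inr ⟨reach_step hz.1 ha, hy, fun h => hz.2.2 (h.step ha.symm hz.2.1)⟩
  have hex : ∃ z ∈ E, G.Adj z b := by
    by_contra hno
    push Not at hno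
    have hcl : ∀ a c, a ∈ E → G.Adj a c → c ∈ E := by
      intro a c ha hac
      rcases hE a c ha hac with rfl | h
      · exact absurd hac (hno a ha)
      · exact h
    obtain ⟨t, ht⟩ := hr
    have hv : v ∈ E := ht.symm.closed hcl ⟨⟨t, ht⟩, hrb, hrn⟩ v ht.left_mem
    exact hv.2.2 ⟨{v}, HasP.single G v, by simpa using Ne.symm hv.2.1⟩
  let H : SimpleGraph V :=
    { Adj := fun x y => G.Adj x y ∧ (x = b ∨ x ∈ E) ∧ (y = b ∨ y ∈ E)
      symm := ⟨fun x y h => ⟨h.1.symm, h.2.2, h.2.1⟩⟩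
      loopless := ⟨fun x h => G.loopless.irrefl x h.1⟩ }
  have hHG : H ≤ G := fun x y h => h.1
  obtain ⟨z, t, hz, hzt⟩ := hA H hHG b
  have htE : ∀ a ∈ t, a ∈ {a | a = b ∨ a ∈ E} :=
    hz.closed (W := {a | a = b ∨ a ∈ E}) (fun a c _ (hac : H.Adj a c) => hac.2.2) (Or.inl rfl)
  have hzE : z ∈ E := by
    rcases htE z hz.right_mem with h | h
    · exfalso
      subst h
      have := hz.eq_single
      subst this
      obtain ⟨y, hy, hyz⟩ := hex
      have : 0 < hdeg H z := by
        unfold hdeg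
        apply Finset.card_pos.2
        exact ⟨y, by simpa [H] using ⟨hyz.symm, Or.inr hy⟩⟩
      have h2 := Nat.lt_two_pow_self (n := hdeg H z)
      simp at hzt
      omega
    · exact h
  have hdeg_eq : hdeg H z = hdeg G z := by
    unfold hdeg
    congr 1
    ext y
    simp only [Finset.mem_filter, Finset.mem_univ, true_and]
    exact ⟨fun h => h.1, fun h => ⟨h, Or.inr hzE, hE z y hzE h⟩⟩
  have hmeet : ∀ a ∈ s, a ∈ t → a = b := by
    intro a has hat
    by_contra hab
    rcases htE a hat with h | h
    · exact hab h
    · exact h.2.2 (Av.of_initial hbs.1 has hab)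
  have hnew := hbs.1.join' (hz.mono hHG) hmeet
  have hle : (s ∪ t).card ≤ s.card := by
    refine hmax (z, s ∪ t) ⟨hnew, ?_⟩
    rw [← hdeg_eq]
    exact hzt.trans (Finset.card_le_card Finset.subset_union_right)
  have hzs : z ∉ s := fun h => hzE.2.1 (hmeet z h hz.right_mem)
  have : s.card < (s ∪ t).card := by
    apply Finset.card_lt_card
    refine ⟨Finset.subset_union_left, fun h => hzs (h ?_)⟩
    exact Finset.mem_union_right _ hz.right_mem
  omega

/-- The inductive step: `G` splits as `G₀` plus a matching given by the partial involution `f`,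
which always switches sides. -/
theorem step_lemma {V : Type} [Fintype V] (G G₀ : SimpleGraph V) (hle : G₀ ≤ G) (c : V → Bool)
    (h₀ : ∀ x y, G₀.Adj x y ↔ G.Adj x y ∧ c x = c y)
    (hm : ∀ x y z, G.Adj x y → G.Adj x z → c x ≠ c y → c x ≠ c z → y = z)
    (hplus : ∀ v, ∃ b s, HasP G₀ v b s ∧ 2 ^ hdeg G₀ b ≤ s.card ∧
      ∀ r, (∃ t, HasP G₀ v r t) → r ≠ b → Av G₀ b v r) (v : V) :
    ∃ b s, HasP G v b s ∧ 2 ^ hdeg G b ≤ s.card := by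
  classical
  by_contra hwin
  push Not at hwin
  have hd0 : ∀ b, (∀ a, G.Adj b a → c b = c a) → hdeg G b = hdeg G₀ b := by
    intro b hb
    unfold hdeg
    congr 1
    ext y
    simp only [Finset.mem_filter, Finset.mem_univ, true_and, h₀]
    exact ⟨fun h => ⟨h, hb y h⟩, fun h => h.1⟩
  have hd1 : ∀ b a, G.Adj b a → c b ≠ c a → hdeg G b = hdeg G₀ b + 1 := by
    intro b a hba hc
    unfold hdeg
    rw [← Finset.card_insert_of_notMem (a := a)]
    · congr 1
      ext y
      simp only [Finset.mem_filter, Finset.mem_univ, true_and, h₀, Finset.mem_insert]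
      constructor
      · intro h
        by_cases hcy : c b = c y
        · exact Or.inr ⟨h, hcy⟩
        · exact Or.inl (hm b y a h hba hcy hc)
      · rintro (rfl | h)
        · exact hba
        · exact h.1
    · simp [h₀, hc]
  have hcol : ∀ x y t, HasP G₀ x y t → c y = c x := by
    intro x y t h
    exact h.closed (W := {z | c z = c x})
      (fun a b ha hab => ((h₀ a b).1 hab).2.symm.trans ha) rfl y h.right_mem
  -- the main induction
  have key : ∀ m : ℕ, ∀ (U : Finset V) (b a : V) (s : Finset V), (Uᶜ).card ≤ m →
      (∀ x y, x ∈ U → G₀.Adj x y → y ∈ U) → HasP G v b s → s ⊆ U →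
      2 ^ hdeg G b ≤ 2 * s.card → G.Adj b a → c b ≠ c a → a ∉ U →
      (∀ r ∈ U, r ≠ b → ∃ e X Y, HasP G v r X ∧ HasP G b e Y ∧ X ⊆ U ∧ Y ⊆ U ∧
        (∀ q ∈ X, q ∉ Y) ∧ hdeg G e ≤ hdeg G b) → False := by
    intro m
    induction m with
    | zero =>
      intro U b a s hU _ _ _ _ _ _ haU _
      have : a ∈ Uᶜ := by simpa using haU
      have := Finset.card_pos.2 ⟨a, this⟩
      omega
    | succ m ih =>
      intro U b a s hU hcl hs hsU hsc hba hc haU hret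
      obtain ⟨b', t, ht, htc, hns⟩ := hplus a
      have hclc : ∀ x y, x ∈ {x | x ∉ U} → G₀.Adj x y → y ∈ {x | x ∉ U} :=
        fun x y hx hxy hy => hx (hcl y x hy hxy.symm)
      have hout : ∀ r t, HasP G₀ a r t → ∀ q ∈ t, q ∉ U := fun r t h => h.closed hclc haU
      have hdis : ∀ q ∈ s, q ∉ t := fun q hq hqt => hout _ _ ht q hqt (hsU hq)
      have hbig := hs.join (ht.mono hle) hba hdis
      have hbc : (s ∪ t).card = s.card + t.card :=
        Finset.card_union_of_disjoint (Finset.disjoint_left.2 hdis)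
      have hlt := hwin _ _ hbig
      rw [hbc] at hlt
      by_cases hx : ∃ r, G.Adj b' r ∧ c b' ≠ c r
      swap
      · push Not at hx
        rw [hd0 b' hx] at hlt
        omega
      obtain ⟨r, hbr, hcr⟩ := hx
      have hdb' := hd1 b' r hbr hcr
      have hdb := hd1 b a hba hc
      have hk : hdeg G b < hdeg G b' := by
        by_contra hk
        have h1 : 2 ^ hdeg G b' ≤ 2 ^ hdeg G b := Nat.pow_le_pow_right (by norm_num) (by omega)
        rw [hdb', pow_succ] at hlt
        rw [hdb', pow_succ] at h1
        omega
      have hkt : 2 ^ hdeg G b ≤ t.card :=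
        (Nat.pow_le_pow_right (by norm_num) (by omega)).trans htc
      have hrb : r ≠ b := by
        rintro rfl
        have hb'a : b' = a := hm r b' a hbr.symm hba (Ne.symm hcr) hc
        subst hb'a
        rw [ht.eq_single] at hkt
        have h2 := Nat.lt_two_pow_self (n := hdeg G r)
        simp at hkt
        omega
      by_cases hrU : r ∈ U
      · obtain ⟨e, X, Y, hX, hY, hXU, hYU, hXY, he⟩ := hret r hrU hrb
        have h1 : HasP G b' e (t ∪ Y) :=
          (ht.mono hle).symm.join hY hba.symm (fun q hq hqY => hout _ _ ht q hq (hYU hqY))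
        have h2 : HasP G v e (X ∪ (t ∪ Y)) := by
          refine hX.join h1 hbr.symm ?_
          intro q hq hq'
          rcases Finset.mem_union.1 hq' with h | h
          · exact hout _ _ ht q h (hXU hq)
          · exact hXY q hq h
        have h3 := hwin _ _ h2
        have h4 : t.card ≤ (X ∪ (t ∪ Y)).card :=
          Finset.card_le_card (fun q hq => by simp [hq])
        have h5 : 2 ^ hdeg G e ≤ 2 ^ hdeg G b := Nat.pow_le_pow_right (by norm_num) he
        omega
      · let C : Finset V := Finset.univ.filter (fun q => ∃ t, HasP G₀ a q t)
        have hC : ∀ q, q ∈ C ↔ ∃ t, HasP G₀ a q t := by simp [C]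
        have hCcl : ∀ x y, x ∈ (C : Set V) → G₀.Adj x y → y ∈ (C : Set V) := by
          intro x y hx hxy
          have hx : x ∈ C := hx
          exact (hC y).2 (reach_step ((hC x).1 hx) hxy)
        have haC : a ∈ C := (hC a).2 ⟨_, HasP.single _ _⟩
        have hsub : ∀ r t, HasP G₀ a r t → t ⊆ C := fun r t h q hq => h.closed hCcl haC q hq
        have hb'U : b' ∉ U := hout _ _ ht b' ht.right_mem
        refine ih (U ∪ C) b' r (s ∪ t) ?_ ?_ hbig ?_ ?_ hbr hcr ?_ ?_
        · have : (U ∪ C)ᶜ ⊂ Uᶜ := by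
            refine ⟨Finset.compl_subset_compl.2 Finset.subset_union_left, fun h => ?_⟩
            have := h (Finset.mem_compl.2 haU)
            simp [haC] at this
          have := Finset.card_lt_card this
          omega
        · intro x y hx hxy
          rcases Finset.mem_union.1 hx with h | h
          · exact Finset.mem_union_left _ (hcl x y h hxy)
          · exact Finset.mem_union_right _ (hCcl x y h hxy)
        · exact Finset.union_subset_union hsU (hsub _ _ ht)
        · rw [hbc, hdb', pow_succ]
          omega
        · intro h
          rcases Finset.mem_union.1 h with h | h
          · exact hrU h
          · obtain ⟨t', ht'⟩ := (hC r).1 h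
            exact hcr ((hcol _ _ _ ht).trans (hcol _ _ _ ht').symm)
        · intro q hq hqb
          rcases Finset.mem_union.1 hq with h | h
          · by_cases hqb2 : q = b
            · subst hqb2
              refine ⟨b', s, {b'}, hs, HasP.single _ _, ?_, ?_, ?_, le_rfl⟩
              · exact hsU.trans Finset.subset_union_left
              · exact Finset.singleton_subset_iff.2
                  (Finset.mem_union_right _ (hsub _ _ ht ht.right_mem))
              · intro x hx hx'
                rw [Finset.mem_singleton] at hx'
                subst hx'
                exact hb'U (hsU hx)
            · obtain ⟨e, X, Y, hX, hY, hXU, hYU, hXY, he⟩ := hret q h hqb2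
              refine ⟨e, X, t ∪ Y, hX, ?_, ?_, ?_, ?_, by omega⟩
              · exact (ht.mono hle).symm.join hY hba.symm
                  (fun q hq hqY => hout _ _ ht q hq (hYU hqY))
              · exact hXU.trans Finset.subset_union_left
              · exact Finset.union_subset ((hsub _ _ ht).trans Finset.subset_union_right)
                  (hYU.trans Finset.subset_union_left)
              · intro x hx hx'
                rcases Finset.mem_union.1 hx' with h' | h'
                · exact hout _ _ ht x h' (hXU hx)
                · exact hXY x hx h'
          · obtain ⟨t', ht', hb't'⟩ := hns q ((hC q).1 h) hqb
            refine ⟨b', s ∪ t', {b'}, ?_, HasP.single _ _, ?_, ?_, ?_, le_rfl⟩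
            · exact hs.join (ht'.mono hle) hba
                (fun x hx hx' => hout _ _ ht' x hx' (hsU hx))
            · exact Finset.union_subset_union hsU (hsub _ _ ht')
            · exact Finset.singleton_subset_iff.2
                (Finset.mem_union_right _ (hsub _ _ ht ht.right_mem))
            · intro x hx hx'
              rw [Finset.mem_singleton] at hx'
              subst hx'
              rcases Finset.mem_union.1 hx with h' | h'
              · exact hb'U (hsU h')
              · exact hb't' h'
  -- start
  obtain ⟨b, s, hs, hsc, hns⟩ := hplus v
  have hlt := hwin _ _ (hs.mono hle)
  by_cases hx : ∃ r, G.Adj b r ∧ c b ≠ c r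
  swap
  · push Not at hx
    rw [hd0 b hx] at hlt
    omega
  obtain ⟨a, hba, hc⟩ := hx
  have hdb := hd1 b a hba hc
  let C : Finset V := Finset.univ.filter (fun q => ∃ t, HasP G₀ v q t)
  have hC : ∀ q, q ∈ C ↔ ∃ t, HasP G₀ v q t := by simp [C]
  have hCcl : ∀ x y, x ∈ (C : Set V) → G₀.Adj x y → y ∈ (C : Set V) := by
    intro x y hx hxy
    have hx : x ∈ C := hx
    exact (hC y).2 (reach_step ((hC x).1 hx) hxy)
  have hvC : v ∈ C := (hC v).2 ⟨_, HasP.single _ _⟩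
  have hsub : ∀ r t, HasP G₀ v r t → t ⊆ C := fun r t h q hq => h.closed hCcl hvC q hq
  refine key _ C b a s le_rfl hCcl (hs.mono hle) (hsub _ _ hs) ?_ hba hc ?_ ?_
  · rw [hdb, pow_succ]
    omega
  · intro h
    obtain ⟨t', ht'⟩ := (hC a).1 h
    exact hc ((hcol _ _ _ hs).trans (hcol _ _ _ ht').symm)
  · intro q hq hqb
    obtain ⟨t', ht', hb't'⟩ := hns q ((hC q).1 hq) hqb
    refine ⟨b, t', {b}, ht'.mono hle, HasP.single _ _, hsub _ _ ht', ?_, ?_, le_rfl⟩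
    · exact Finset.singleton_subset_iff.2 (hsub _ _ hs hs.right_mem)
    · intro x hx hx'
      rw [Finset.mem_singleton] at hx'
      subst hx'
      exact hb't' hx

theorem main_claim {V : Type} [Fintype V] {n : ℕ} (φ : V → Fin n → Bool)
    (hφ : Function.Injective φ) (I : Finset (Fin n)) :
    ∀ G : SimpleGraph V,
      (∀ x y, G.Adj x y → ∃ i ∈ I, φ y = Function.update (φ x) i (!φ x i)) →
      ∀ v, ∃ b s, HasP G v b s ∧ 2 ^ hdeg G b ≤ s.card := by
  classical
  induction I using Finset.induction_on with
  | empty =>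
    intro G hG v
    refine ⟨v, {v}, HasP.single _ _, ?_⟩
    have : hdeg G v = 0 := by
      unfold hdeg
      rw [Finset.card_eq_zero, Finset.filter_eq_empty_iff]
      intro y _ hy
      obtain ⟨i, hi, _⟩ := hG v y hy
      simp at hi
    simp [this]
  | insert i I hi ih =>
    intro G hG v
    let G₀ : SimpleGraph V :=
      { Adj := fun x y => G.Adj x y ∧ φ x i = φ y i
        symm := ⟨fun x y h => ⟨h.1.symm, h.2.symm⟩⟩
        loopless := ⟨fun x h => G.loopless.irrefl x h.1⟩ }
    have hle : G₀ ≤ G := fun x y h => h.1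
    have hne : ∀ x y, G.Adj x y → φ x i ≠ φ y i → φ y = Function.update (φ x) i (!φ x i) := by
      intro x y h hc
      obtain ⟨j, hj, hy⟩ := hG x y h
      by_cases hji : j = i
      · subst hji; exact hy
      · exfalso
        apply hc
        rw [hy, Function.update_of_ne (Ne.symm hji)]
    refine step_lemma G G₀ hle (fun x => φ x i) (fun x y => Iff.rfl) ?_ ?_ v
    · intro x y z hy hz hcy hcz
      apply hφ
      rw [hne x y hy hcy, hne x z hz hcz]
    · intro v
      apply plus_of_base
      intro H hH v
      apply ih
      intro x y hxy
      have h1 := hH hxy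
      obtain ⟨j, hj, hy⟩ := hG x y h1.1
      refine ⟨j, ?_, hy⟩
      rcases Finset.mem_insert.1 hj with rfl | h
      · exfalso
        have := h1.2
        rw [hy] at this
        simp at this
      · exact h

/-- Every subgraph `G` of `Q_n` with minimum degree at least `d` contains a path of
length at least `2^d - 1`. -/
theorem hypercube_minDegree_long_path (n d : ℕ) (G : (hypercube n).Subgraph)
    (hne : G.verts.Nonempty)
    (hmin : ∀ v ∈ G.verts, d ≤ (G.neighborSet v).ncard) :
    ∃ (u v : G.verts) (p : G.coe.Walk u v), p.IsPath ∧ 2 ^ d - 1 ≤ p.length := by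
  classical
  obtain ⟨v, hv⟩ := hne
  haveI : Fintype G.verts := Fintype.ofFinite _
  obtain ⟨b, s, ⟨p, hp, hs⟩, hsc⟩ := main_claim (V := G.verts) (n := n) (fun x => x.1)
    Subtype.val_injective Finset.univ G.coe (by
      intro x y hxy
      have h1 : (hypercube n).Adj x.1 y.1 := G.adj_sub hxy
      have h2 : hammingDist x.1 y.1 = 1 := by
        have h1 := (SimpleGraph.fromRel_adj (fun x y : Fin n → Bool => hammingDist x y = 1) x.1 y.1).1 h1
        rcases h1.2 with h | h
        · exact h
        · rw [hammingDist_comm]; exact h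
      unfold hammingDist at h2
      obtain ⟨i, hi⟩ := Finset.card_eq_one.1 h2
      refine ⟨i, Finset.mem_univ _, ?_⟩
      have hi' : ∀ j, x.1 j ≠ y.1 j ↔ j = i := by
        intro j
        have := Finset.ext_iff.1 hi j
        simpa using this
      funext j
      by_cases hj : j = i
      · subst hj
        have := (hi' j).2 rfl
        simp only [Function.update_self]
        revert this
        cases x.1 j <;> cases y.1 j <;> simp
      · have := mt (hi' j).1 hj
        push Not at this
        rw [Function.update_of_ne hj]
        exact this.symm) ⟨v, hv⟩
  refine ⟨_, b, p, hp, ?_⟩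
  have hdb : d ≤ hdeg G.coe b := by
    refine (hmin b.1 b.2).trans ?_
    have : G.neighborSet b.1 = Subtype.val ''
        ((Finset.univ.filter (fun y => G.coe.Adj b y) : Finset G.verts) : Set G.verts) := by
      ext y
      simp only [SimpleGraph.Subgraph.mem_neighborSet, Set.mem_image, Finset.mem_coe,
        Finset.mem_filter, Finset.mem_univ, true_and]
      constructor
      · intro h
        exact ⟨⟨y, G.edge_vert h.symm⟩, h, rfl⟩
      · rintro ⟨z, h, rfl⟩
        exact h
    rw [this, Set.ncard_image_of_injective _ Subtype.val_injective, Set.ncard_coe_finset]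
    unfold hdeg
    apply le_of_eq
    congr
  have h1 : s = p.support.toFinset := by
    ext z
    simp [hs]
  have h2 : s.card ≤ p.length + 1 := by
    rw [h1, ← SimpleGraph.Walk.length_support]
    exact List.toFinset_card_le _
  have h3 : 2 ^ d ≤ 2 ^ hdeg G.coe b := Nat.pow_le_pow_right (by norm_num) hdb
  omega
end

section
/- Every subgraph G of the n-dimensional hypercube Q_n with average degree at least d contains a path of length at least 2^(d/2) - 1. -/
namespace HC
open Classical
variable {V : Type*} {G : SimpleGraph V}

def Bd (G : SimpleGraph V) (A M : Finset V) (c : V) : Prop :=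
  ∀ m ∈ M, ∀ x ∈ A, G.Adj m x → x ∈ M ∨ x = c

def LP (G : SimpleGraph V) (A : Finset V) (s t : V) (L : ℕ) : Prop :=
  ∃ p : G.Walk s t, p.IsPath ∧ (∀ x ∈ p.support, x ∈ A) ∧ L ≤ p.length

noncomputable def deg (G : SimpleGraph V) (A : Finset V) (x : V) : ℕ := (A.filter (G.Adj x)).card

def CH (G : SimpleGraph V) (S : Finset V) (u v : V) : Prop :=
  ∀ M ⊆ S, M.Nonempty → u ∉ M → v ∉ M → ∀ c, ¬ Bd G S M c

def Conn (G : SimpleGraph V) (A : Finset V) (u : V) : Prop :=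
  u ∈ A ∧ ∀ x ∈ A, LP G A u x 0

theorem LP.refl {A : Finset V} {s : V} (h : s ∈ A) : LP G A s s 0 :=
  ⟨SimpleGraph.Walk.nil, by simp, by simpa using h, by simp⟩

theorem LP.mono {A B : Finset V} {s t : V} {L L' : ℕ} (h : LP G A s t L) (hAB : A ⊆ B)
    (hL : L' ≤ L) : LP G B s t L' := by
  obtain ⟨p, h1, h2, h3⟩ := h
  exact ⟨p, h1, fun x hx => hAB (h2 x hx), hL.trans h3⟩

theorem LP.symm {A : Finset V} {s t : V} {L : ℕ} (h : LP G A s t L) : LP G A t s L := by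
  obtain ⟨p, h1, h2, h3⟩ := h
  exact ⟨p.reverse, h1.reverse, by simpa using h2, by simpa using h3⟩

theorem LP.left {A : Finset V} {s t : V} {L : ℕ} (h : LP G A s t L) : s ∈ A := by
  obtain ⟨p, h1, h2, h3⟩ := h
  exact h2 _ (by simp)

theorem LP.right {A : Finset V} {s t : V} {L : ℕ} (h : LP G A s t L) : t ∈ A := h.symm.left

/-- glue two paths at a common vertex -/
theorem LP.glue {A B C : Finset V} {s t r : V} {L1 L2 L : ℕ} (h : LP G A s t L1)
    (h' : LP G B t r L2) (hA : A ⊆ C) (hB : B ⊆ C) (hd : ∀ x ∈ A, x ∈ B → x = t)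
    (hL : L ≤ L1 + L2) : LP G C s r L := by
  obtain ⟨p, h1, h2, h3⟩ := h
  obtain ⟨q, k1, k2, k3⟩ := h'
  refine ⟨p.append q, ?_, ?_, ?_⟩
  · rw [SimpleGraph.Walk.isPath_def, SimpleGraph.Walk.support_append, List.nodup_append]
    refine ⟨h1.support_nodup, k1.support_nodup.tail, ?_⟩
    intro a ha b hb hab
    subst hab
    have hat := hd a (h2 a ha) (k2 a (List.mem_of_mem_tail hb))
    subst hat
    have := k1.support_nodup
    rw [← SimpleGraph.Walk.cons_tail_support] at this
    exact (List.nodup_cons.1 this).1 hb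
  · intro x hx
    rw [SimpleGraph.Walk.mem_support_append_iff] at hx
    rcases hx with hx | hx
    · exact hA (h2 x hx)
    · exact hB (k2 x hx)
  · rw [SimpleGraph.Walk.length_append]; omega

theorem LP.edge {s t : V} (h : G.Adj s t) : LP G {s, t} s t 1 :=
  ⟨h.toWalk, by simp [h.ne], by simp, by simp⟩

/-- join two disjoint paths by an edge -/
theorem LP.join {A B C : Finset V} {s t t' r : V} {L1 L2 L : ℕ} (h : LP G A s t L1)
    (ha : G.Adj t t') (h' : LP G B t' r L2) (hA : A ⊆ C) (hB : B ⊆ C)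
    (hd : ∀ x ∈ A, x ∉ B) (hL : L ≤ L1 + L2 + 1) : LP G C s r L := by
  have h1 : LP G (insert t B) t r (1 + L2) := by
    refine LP.glue (LP.edge ha) h' ?_ (Finset.subset_insert _ _) ?_ le_rfl
    · intro x hx
      simp only [Finset.mem_insert, Finset.mem_singleton] at hx ⊢
      rcases hx with rfl | rfl
      · exact Or.inl rfl
      · exact Or.inr h'.left
    · intro x hx hx'
      simp only [Finset.mem_insert, Finset.mem_singleton] at hx
      rcases hx with rfl | rfl
      · exact absurd hx' (hd _ h.right)
      · rfl
  refine LP.glue h h1 hA ?_ ?_ (by omega)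
  · intro x hx
    rcases Finset.mem_insert.1 hx with rfl | hx
    · exact hA h.right
    · exact hB hx
  · intro x hx hx'
    rcases Finset.mem_insert.1 hx' with rfl | hx'
    · rfl
    · exact absurd hx' (hd _ hx)

theorem LP.of_walk {A : Finset V} {s t : V} (p : G.Walk s t) (h : ∀ x ∈ p.support, x ∈ A) :
    LP G A s t 0 :=
  ⟨p.bypass, p.bypass_isPath, fun x hx => h x (p.support_bypass_subset_support hx), by simp⟩

theorem LP.trans {A : Finset V} {s t r : V} {L L' : ℕ} (h : LP G A s t L) (h' : LP G A t r L') :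
    LP G A s r 0 := by
  obtain ⟨p, h1, h2, h3⟩ := h
  obtain ⟨q, k1, k2, k3⟩ := h'
  refine LP.of_walk (p.append q) ?_
  intro x hx
  rw [SimpleGraph.Walk.mem_support_append_iff] at hx
  rcases hx with hx | hx
  · exact h2 x hx
  · exact k2 x hx

theorem LP.step {A : Finset V} {s t r : V} {L : ℕ} (h : LP G A s t L) (ha : G.Adj t r)
    (hr : r ∈ A) : LP G A s r 0 := by
  refine LP.trans h (L' := 0) (LP.of_walk ha.toWalk ?_)
  have := h.right
  intro x hx
  simp at hx
  rcases hx with rfl | rfl <;> assumption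

/-- closed sets trap paths -/
theorem LP.trap {A R : Finset V} {s t : V} {L : ℕ} (h : LP G A s t L) (hs : s ∈ R)
    (hR : ∀ r ∈ R, ∀ x ∈ A, G.Adj r x → x ∈ R) : LP G (A ∩ R) s t L := by
  obtain ⟨p, h1, h2, h3⟩ := h
  refine ⟨p, h1, ?_, h3⟩
  clear h1 h3
  induction p with
  | nil => 
    intro x hx
    simp at hx
    subst hx
    exact Finset.mem_inter.2 ⟨h2 _ (by simp), hs⟩
  | cons ha q ih =>
    intro x hx
    simp only [SimpleGraph.Walk.support_cons, List.mem_cons] at hx h2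
    rcases hx with rfl | hx
    · exact Finset.mem_inter.2 ⟨h2 _ (by simp), hs⟩
    · exact ih (hR _ hs _ (h2 _ (by simp)) ha) (fun x hx => h2 x (Or.inr hx)) x hx

/-- set reachable from s -/
noncomputable def reach (G : SimpleGraph V) (A : Finset V) (s : V) : Finset V :=
  A.filter (fun x => LP G A s x 0)

theorem reach_sub {A : Finset V} {s : V} : reach G A s ⊆ A := Finset.filter_subset _ _

theorem reach_self {A : Finset V} {s : V} (h : s ∈ A) : s ∈ reach G A s :=
  Finset.mem_filter.2 ⟨h, LP.refl h⟩

theorem reach_closed {A : Finset V} {s : V} :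
    ∀ r ∈ reach G A s, ∀ x ∈ A, G.Adj r x → x ∈ reach G A s := by
  intro r hr x hx ha
  exact Finset.mem_filter.2 ⟨hx, (Finset.mem_filter.1 hr).2.step ha hx⟩

theorem reach_LP {A : Finset V} {s x : V} (h : x ∈ reach G A s) : LP G (reach G A s) s x 0 := by
  have h1 := (Finset.mem_filter.1 h).2
  exact (h1.trap (reach_self h1.left) reach_closed).mono (Finset.inter_subset_right) le_rfl

theorem mem_reach {A : Finset V} {s x : V} : x ∈ reach G A s ↔ LP G A s x 0 :=
  ⟨fun h => (Finset.mem_filter.1 h).2, fun h => Finset.mem_filter.2 ⟨h.right, h⟩⟩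

theorem Conn.bd {A M : Finset V} {u : V} (h : Conn G A u) (hM : M ⊆ A) (hne : M.Nonempty)
    (hu : u ∉ M) : ∃ m ∈ M, ∃ x ∈ A, x ∉ M ∧ G.Adj m x := by
  by_contra hcon
  push Not at hcon
  obtain ⟨m, hm⟩ := hne
  have := (h.2 m (hM hm)).symm.trap hm (by
    intro r hr x hx ha
    by_contra hxM
    exact hcon r hr x hx hxM ha)
  exact hu (Finset.mem_inter.1 this.right).2

/-- complement of a set hanging at c is connected -/
theorem Conn.sdiff {A M : Finset V} {u c : V} (h : Conn G A u) (hu : u ∉ M)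
    (hb : Bd G A M c) : Conn G (A \ M) u := by
  refine ⟨Finset.mem_sdiff.2 ⟨h.1, hu⟩, ?_⟩
  intro x hx
  by_contra hcon
  have hxA := Finset.mem_sdiff.1 hx
  -- reach from x in A \ M
  set R := reach G (A \ M) x with hR
  have huR : u ∉ R := fun h' => hcon (mem_reach.1 h').symm
  by_cases hcR : c ∈ R
  · -- the component of u in A \ M misses c
    set T := reach G (A \ M) u with hT
    have hcT : c ∉ T := by
      intro hc
      exact hcon (LP.trans (mem_reach.1 hc) (mem_reach.1 hcR).symm)
    have := (h.2 x hxA.1).trap (R := T) (reach_self (Finset.mem_sdiff.2 ⟨h.1, hu⟩)) (by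
      intro r hr y hy ha
      have hrA := Finset.mem_sdiff.1 (reach_sub hr)
      by_cases hyM : y ∈ M
      · rcases hb y hyM r hrA.1 ha.symm with h1 | h1
        · exact absurd h1 hrA.2
        · subst h1; exact absurd hr hcT
      · exact reach_closed r hr y (Finset.mem_sdiff.2 ⟨hy, hyM⟩) ha)
    exact hcon (mem_reach.1 (Finset.mem_inter.1 this.right).2)
  · have := (h.2 x hxA.1).symm.trap (R := R) (reach_self hx) (by
      intro r hr y hy ha
      have hrA := Finset.mem_sdiff.1 (reach_sub hr)
      by_cases hyM : y ∈ M
      · rcases hb y hyM r hrA.1 ha.symm with h1 | h1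
        · exact absurd h1 hrA.2
        · subst h1; exact absurd hr hcR
      · exact reach_closed r hr y (Finset.mem_sdiff.2 ⟨hy, hyM⟩) ha)
    exact huR (Finset.mem_inter.1 this.right).2

end HC

namespace HC
open Classical
variable {V : Type*} {G : SimpleGraph V}

structure Leaf (G : SimpleGraph V) (X : Finset V) (u c : V) (I : Finset V) : Prop where
  sub : I ⊆ X
  ne : I.Nonempty
  hu : u ∉ I
  hc : c ∈ X
  hcI : c ∉ I
  bd : Bd G X I c
  min : ∀ M ⊆ I, M.Nonempty → ∀ c', Bd G X M c' → M = I

theorem leaf_exists {X M : Finset V} {u c0 : V} (hX : Conn G X u) (hM : M ⊆ X)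
    (hne : M.Nonempty) (hu : u ∉ M) (hb : Bd G X M c0) : ∃ I ⊆ M, ∃ c, Leaf G X u c I := by
  have hex : ∃ k, ∃ I ⊆ M, I.Nonempty ∧ (∃ c, Bd G X I c) ∧ I.card = k :=
    ⟨_, M, subset_rfl, hne, ⟨c0, hb⟩, rfl⟩
  obtain ⟨I, hIM, hIne, ⟨c, hc⟩, hcard⟩ := Nat.find_spec hex
  have hmin : ∀ J ⊆ M, J.Nonempty → (∃ c, Bd G X J c) → I.card ≤ J.card := by
    intro J h1 h2 h3
    rw [hcard]
    exact Nat.find_min' hex ⟨J, h1, h2, h3, rfl⟩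
  obtain ⟨m, hm, x, hx, hxI, ha⟩ := hX.bd (hIM.trans hM) hIne (fun h => hu (hIM h))
  have hxc : x = c := (hc m hm x hx ha).resolve_left hxI
  subst hxc
  refine ⟨I, hIM, x, hIM.trans hM, hIne, fun h => hu (hIM h), hx, hxI, hc, ?_⟩
  intro J hJ hJne c' hb'
  exact Finset.eq_of_subset_of_card_le hJ (hmin J (hJ.trans hIM) hJne ⟨c', hb'⟩)

theorem Leaf.nbr {X I : Finset V} {u c x y : V} (h : Leaf G X u c I) (hx : x ∈ I) (hy : y ∈ X)
    (ha : G.Adj x y) : y ∈ insert c I := by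
  rcases h.bd x hx y hy ha with h | h
  · exact Finset.mem_insert_of_mem h
  · subst h; exact Finset.mem_insert_self _ _

theorem Leaf.deg {X I : Finset V} {u c x : V} (h : Leaf G X u c I) (hx : x ∈ I) :
    HC.deg G X x ≤ HC.deg G (insert c I) x := by
  apply Finset.card_le_card
  intro y hy
  rw [Finset.mem_filter] at hy ⊢
  exact ⟨h.nbr hx hy.1 hy.2, hy.2⟩

theorem Leaf.insert_sub {X I : Finset V} {u c : V} (h : Leaf G X u c I) : insert c I ⊆ X :=
  Finset.insert_subset h.hc h.sub

theorem Leaf.CH0 {X I M : Finset V} {u c t c' : V} (h : Leaf G X u c I) (ht : t ∈ I)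
    (hM : M ⊆ insert c I) (hne : M.Nonempty) (hc : c ∉ M) (htM : t ∉ M)
    (hb : Bd G (insert c I) M c') : False := by
  have hMI : M ⊆ I := by
    intro x hx
    rcases Finset.mem_insert.1 (hM hx) with h | h
    · subst h; exact absurd hx hc
    · exact h
  have := h.min M hMI hne c' (fun m hm x hx ha => hb m hm x (h.nbr (hMI hm) hx ha) ha)
  rw [this] at htM
  exact htM ht

theorem Leaf.CH1 {X I : Finset V} {u c t : V} (h : Leaf G X u c I) (ht : t ∈ I) :
    CH G (insert c I) c t :=
  fun _ hM hne hc htM _ hb => h.CH0 ht hM hne hc htM hb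

theorem Leaf.CH2 {X I : Finset V} {u c t t' : V} (hX : Conn G X u) (h : Leaf G X u c I)
    (ht : t ∈ I) (ht' : t' ∈ I) (hne : t ≠ t') : CH G (insert c I) t t' := by
  intro M hM hMne htM ht'M m hb
  by_cases hc : c ∈ M
  · set R := (insert c I \ M) \ {m} with hR
    have hRI : R ⊆ I := by
      intro x hx
      simp only [hR, Finset.mem_sdiff, Finset.mem_insert, Finset.mem_singleton] at hx
      rcases hx.1.1 with h | h
      · subst h; exact absurd hc hx.1.2
      · exact h
    have hRne : R.Nonempty := by
      by_cases htm : t = m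
      · refine ⟨t', ?_⟩
        simp [hR, ht', ht'M]
        intro h; exact hne (htm.trans h.symm)
      · refine ⟨t, ?_⟩
        simp [hR, ht, htM, htm]
    have hRb : Bd G X R m := by
      intro r hr x hx ha
      have hx' := h.nbr (hRI hr) hx ha
      simp only [hR, Finset.mem_sdiff, Finset.mem_singleton] at hr ⊢
      by_cases hxM : x ∈ M
      · rcases hb x hxM r hr.1.1 ha.symm with h | h
        · exact absurd h hr.1.2
        · exact absurd h hr.2
      · tauto
    have hRI' := h.min R hRI hRne m hRb
    obtain ⟨i, hi, x, hx, hxI, ha⟩ := hX.bd h.sub h.ne h.hu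
    have hxc := (h.bd i hi x hx ha).resolve_left hxI
    subst hxc
    have hi' := hi
    rw [← hRI', hR] at hi'
    simp only [Finset.mem_sdiff, Finset.mem_singleton] at hi'
    rcases hb x hc i hi'.1.1 ha.symm with h | h
    · exact hi'.1.2 h
    · exact hi'.2 h
  · exact h.CH0 ht hM hMne hc htM hb

def f (e : ℕ) : ℕ := 3 * 2 ^ (e - 2) - 1

theorem f_succ {e : ℕ} (h : 2 ≤ e) : f (e + 1) = 2 * f e + 1 := by
  obtain ⟨k, rfl⟩ := Nat.exists_eq_add_of_le h
  have : 2 + k + 1 - 2 = k + 1 := by omega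
  have h2 : 2 + k - 2 = k := by omega
  have h3 : 0 < 2 ^ k := by positivity
  simp only [f, this, h2, pow_succ]
  omega

def D3 (G : SimpleGraph V) (e N : ℕ) : Prop :=
  ∀ S : Finset V, S.card < N → ∀ u v w : V, u ∈ S → v ∈ S → u ≠ v → CH G S u v →
    (∀ x ∈ S, x ≠ u → x ≠ v → x ≠ w → e ≤ deg G S x) →
    (∃ x ∈ S, x ≠ u ∧ x ≠ v ∧ x ≠ w) → LP G S u v (f e)

theorem deg_card {A : Finset V} {x : V} (hx : x ∈ A) : deg G A x + 1 ≤ A.card := by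
  have : A.filter (G.Adj x) ⊆ A.erase x := by
    intro y hy
    rw [Finset.mem_filter] at hy
    exact Finset.mem_erase.2 ⟨hy.2.ne', hy.1⟩
  have := Finset.card_le_card this
  rw [Finset.card_erase_of_mem hx] at this
  have h0 : 0 < A.card := Finset.card_pos.2 ⟨x, hx⟩
  unfold deg
  omega

theorem exists_fourth {A : Finset V} (h : 4 ≤ A.card) (a b c : V) :
    ∃ x ∈ A, x ≠ a ∧ x ≠ b ∧ x ≠ c := by
  by_contra hcon
  push Not at hcon
  have : A ⊆ {a, b, c} := by
    intro x hx
    simp only [Finset.mem_insert, Finset.mem_singleton]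
    have := hcon x hx
    tauto
  have := (Finset.card_le_card this).trans Finset.card_le_three
  omega

theorem Leaf.path1 {X I : Finset V} {u c t w : V} {e N : ℕ} (hD : D3 G e N) (he : 3 ≤ e)
    (h : Leaf G X u c I) (hN : (insert c I).card < N) (ht : t ∈ I)
    (hd : ∀ x ∈ I, x ≠ w → e ≤ HC.deg G X x) (hw : ∃ z ∈ I, z ≠ w) :
    LP G (insert c I) c t (f e) := by
  refine hD _ hN c t w (Finset.mem_insert_self _ _) (Finset.mem_insert_of_mem ht) ?_ (h.CH1 ht) ?_ ?_
  · rintro rfl; exact h.hcI ht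
  · intro x hx hxc _ hxw
    have hxI := (Finset.mem_insert.1 hx).resolve_left hxc
    exact (hd x hxI hxw).trans (h.deg hxI)
  · obtain ⟨z, hz, hzw⟩ := hw
    have h1 := (hd z hz hzw).trans (h.deg hz)
    have h2 := deg_card (G := G) (Finset.mem_insert_of_mem (b := c) hz)
    exact exists_fourth (by omega) c t w

theorem Leaf.path2 {X I : Finset V} {u c t t' : V} {e N : ℕ} (hD : D3 G e N) (he : 3 ≤ e)
    (hX : Conn G X u) (h : Leaf G X u c I) (hN : (insert c I).card < N) (ht : t ∈ I) (ht' : t' ∈ I)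
    (hne : t ≠ t') (hd : ∀ x ∈ I, e ≤ HC.deg G X x) :
    LP G (insert c I) t t' (f e) := by
  refine hD _ hN t t' c (Finset.mem_insert_of_mem ht) (Finset.mem_insert_of_mem ht') hne
    (h.CH2 hX ht ht' hne) ?_ ?_
  · intro x hx _ _ hxc
    have hxI := (Finset.mem_insert.1 hx).resolve_left hxc
    exact (hd x hxI).trans (h.deg hxI)
  · have h1 := (hd t ht).trans (h.deg ht)
    have h2 := deg_card (G := G) (Finset.mem_insert_of_mem (b := c) ht)
    exact exists_fourth (by omega) t t' c

end HC

namespace HC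
open Classical
variable {V : Type*} {G : SimpleGraph V}

structure Viol (G : SimpleGraph V) (A : Finset V) (x1 x2 : V) (Y : Finset V) (p : V)
    (R : Finset V) : Prop where
  sub : R ⊆ A
  h1 : x1 ∉ R
  h2 : x2 ∉ R
  hp : p ∉ R
  bd : Bd G A R p
  hY : ∀ y ∈ Y, y ∈ R ∨ y = p

def TwoP (G : SimpleGraph V) (A : Finset V) (x1 x2 : V) (Y : Finset V) : Prop :=
  ∃ y1 ∈ Y, ∃ y2 ∈ Y, y1 ≠ y2 ∧ ∃ A1 ⊆ A, ∃ A2 ⊆ A, (∀ x ∈ A1, x ∉ A2) ∧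
    LP G A1 x1 y1 0 ∧ LP G A2 x2 y2 0

theorem menger_base {A Y : Finset V} {x1 x2 : V} (h2 : x2 ∈ A) (hne : x1 ≠ x2)
    (hYA : Y ⊆ A) (hY : x1 ∈ Y) (hv : ∀ p R, ¬ Viol G A x1 x2 Y p R) : TwoP G A x1 x2 Y := by
  set T := reach G (A.erase x1) x2 with hT
  have hx2 : x2 ∈ A.erase x1 := Finset.mem_erase.2 ⟨hne.symm, h2⟩
  by_cases hex : ∃ y ∈ Y, y ∈ T
  · obtain ⟨y, hy, hyT⟩ := hex
    have hTs : T ⊆ A.erase x1 := reach_sub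
    have hx1T : x1 ∉ T := fun h => (Finset.mem_erase.1 (hTs h)).1 rfl
    refine ⟨x1, hY, y, hy, ?_, {x1}, by simpa using hYA hY, T,
      hTs.trans (Finset.erase_subset _ _), ?_, LP.refl (by simp), reach_LP hyT⟩
    · rintro rfl; exact hx1T hyT
    · intro x hx
      rw [Finset.mem_singleton] at hx
      subst hx; exact hx1T
  · push Not at hex
    exfalso
    refine hv x1 (A.erase x1 \ T) ⟨?_, by simp, ?_, by simp, ?_, ?_⟩
    · exact Finset.sdiff_subset.trans (Finset.erase_subset _ _)
    · intro h; exact (Finset.mem_sdiff.1 h).2 (reach_self hx2)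
    · intro r hr x hx ha
      rw [Finset.mem_sdiff] at hr
      by_cases hx1 : x = x1
      · exact Or.inr hx1
      · left
        have hx' : x ∈ A.erase x1 := Finset.mem_erase.2 ⟨hx1, hx⟩
        refine Finset.mem_sdiff.2 ⟨hx', fun hxT => hr.2 (reach_closed x hxT r hr.1 ha.symm)⟩
    · intro y hy
      by_cases hx1 : y = x1
      · exact Or.inr hx1
      · exact Or.inl (Finset.mem_sdiff.2 ⟨Finset.mem_erase.2 ⟨hx1, hYA hy⟩, hex y hy⟩)

theorem menger (N : ℕ) : ∀ (A Y : Finset V) (x1 x2 : V), A.card ≤ N → x1 ∈ A → x2 ∈ A → x1 ≠ x2 →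
    Y ⊆ A → (∀ p R, ¬ Viol G A x1 x2 Y p R) → TwoP G A x1 x2 Y := by
  induction N with
  | zero =>
    intro A Y x1 x2 hA h1
    have := Finset.card_pos.2 ⟨x1, h1⟩
    omega
  | succ N ih =>
    intro A Y x1 x2 hA h1 h2 hne hYA hv
    by_cases hY : x1 ∈ Y
    · exact menger_base h2 hne hYA hY hv
    by_contra hno
    set A' := A.erase x1 with hA'
    have hA'A : A' ⊆ A := Finset.erase_subset _ _
    have hx1A' : x1 ∉ A' := by simp [hA']
    have hYA' : Y ⊆ A' := fun y hy => Finset.mem_erase.2 ⟨fun h => hY (h ▸ hy), hYA hy⟩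
    have hx2A' : x2 ∈ A' := Finset.mem_erase.2 ⟨hne.symm, h2⟩
    have hcard : A'.card ≤ N := by
      rw [hA', Finset.card_erase_of_mem h1]; omega
    have hall : ∀ n ∈ A', n ≠ x2 → G.Adj x1 n → ∃ p R, Viol G A' n x2 Y p R := by
      intro n hn hnx ha
      by_contra hcon
      push Not at hcon
      obtain ⟨y1, hy1, y2, hy2, hy, A1, hA1, A2, hA2, hdis, hl1, hl2⟩ :=
        ih A' Y n x2 hcard hn hx2A' hnx hYA' hcon
      apply hno
      refine ⟨y1, hy1, y2, hy2, hy, insert x1 A1, Finset.insert_subset h1 (hA1.trans hA'A), A2,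
        hA2.trans hA'A, ?_, ?_, hl2⟩
      · intro x hx
        rcases Finset.mem_insert.1 hx with rfl | hx
        · exact fun h => hx1A' (hA2 h)
        · exact hdis x hx
      · refine LP.join (LP.refl (Finset.mem_singleton_self x1)) ha hl1 (by simp)
          (Finset.subset_insert _ _) ?_ (by omega)
        intro x hx
        rw [Finset.mem_singleton] at hx
        subst hx
        exact fun h => hx1A' (hA1 h)
    have hex0 : ∃ n ∈ A', n ≠ x2 ∧ G.Adj x1 n := by
      by_contra hcon
      push Not at hcon
      refine hv x2 (A'.erase x2) ⟨(Finset.erase_subset _ _).trans hA'A, ?_, by simp, by simp, ?_, ?_⟩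
      · intro h; exact hx1A' (Finset.mem_of_mem_erase h)
      · intro r hr x hx ha
        rw [Finset.mem_erase] at hr
        by_cases hx2 : x = x2
        · exact Or.inr hx2
        · left
          refine Finset.mem_erase.2 ⟨hx2, Finset.mem_erase.2 ⟨?_, hx⟩⟩
          rintro rfl
          exact hcon r hr.2 hr.1 ha.symm
      · intro y hy
        by_cases hx2 : y = x2
        · exact Or.inr hx2
        · exact Or.inl (Finset.mem_erase.2 ⟨hx2, hYA' hy⟩)
    have hex : ∃ k, ∃ n ∈ A', n ≠ x2 ∧ G.Adj x1 n ∧ ∃ p R, Viol G A' n x2 Y p R ∧ R.card = k := by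
      obtain ⟨n, hn, hnx, ha⟩ := hex0
      obtain ⟨p, R, h⟩ := hall n hn hnx ha
      exact ⟨_, n, hn, hnx, ha, p, R, h, rfl⟩
    obtain ⟨n, hn, hnx, ha, p, R, hR, hRc⟩ := Nat.find_spec hex
    have hmin : ∀ n ∈ A', n ≠ x2 → G.Adj x1 n → ∀ p R', Viol G A' n x2 Y p R' → R.card ≤ R'.card := by
      intro n hn hnx ha p R' hR'
      rw [hRc]
      exact Nat.find_min' hex ⟨n, hn, hnx, ha, p, R', hR', rfl⟩
    have hn2 : ∃ n2 ∈ R, G.Adj x1 n2 := by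
      by_contra hcon
      push Not at hcon
      refine hv p R ⟨hR.sub.trans hA'A, fun h => hx1A' (hR.sub h), hR.h2, hR.hp, ?_, hR.hY⟩
      intro r hr x hx har
      by_cases hx1 : x = x1
      · rw [hx1] at har; exact absurd har.symm (hcon r hr)
      · exact hR.bd r hr x (Finset.mem_erase.2 ⟨hx1, hx⟩) har
    obtain ⟨n2, hn2R, hn2a⟩ := hn2
    have hn2A := hR.sub hn2R
    have hn2x : n2 ≠ x2 := fun h => hR.h2 (h ▸ hn2R)
    obtain ⟨p2, R2, hR2⟩ := hall n2 hn2A hn2x hn2a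
    have hlt : ∀ z, z ∈ R → z ∉ R2 → (R ∩ R2).card < R.card := by
      intro z hz hz2
      apply Finset.card_lt_card
      refine ⟨Finset.inter_subset_left, fun h => hz2 (Finset.mem_inter.1 (h hz)).2⟩
    by_cases hp2 : p2 ∈ R
    · have hpR2 : p ∉ R2 := by
        intro hp
        by_cases hl : LP G (A' \ R) p x2 0
        · have := hl.trap hp (by
            intro r hr x hx ha
            rw [Finset.mem_sdiff] at hx
            rcases hR2.bd r hr x hx.1 ha with h | h
            · exact h
            · subst h; exact absurd hp2 hx.2)
          exact hR2.h2 (Finset.mem_inter.1 this.right).2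
        · set T := R ∪ reach G (A' \ R) p with hT
          have hTA' : T ⊆ A' := Finset.union_subset hR.sub (reach_sub.trans Finset.sdiff_subset)
          have hpT : p ∈ reach G (A' \ R) p := reach_self (Finset.mem_sdiff.2 ⟨hR2.sub hp, hR.hp⟩)
          refine hv x1 T ⟨hTA'.trans hA'A, fun h => hx1A' (hTA' h), ?_, fun h => hx1A' (hTA' h), ?_, ?_⟩
          · intro h
            rcases Finset.mem_union.1 h with h | h
            · exact hR.h2 h
            · exact hl (mem_reach.1 h)
          · intro r hr x hx ha
            by_cases hx1 : x = x1
            · exact Or.inr hx1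
            left
            have hx' : x ∈ A' := Finset.mem_erase.2 ⟨hx1, hx⟩
            rcases Finset.mem_union.1 hr with hr | hr
            · rcases hR.bd r hr x hx' ha with h | h
              · exact Finset.mem_union_left _ h
              · subst h; exact Finset.mem_union_right _ hpT
            · by_cases hxR : x ∈ R
              · exact Finset.mem_union_left _ hxR
              · exact Finset.mem_union_right _
                  (reach_closed r hr x (Finset.mem_sdiff.2 ⟨hx', hxR⟩) ha)
          · intro y hy
            left
            rcases hR.hY y hy with h | h
            · exact Finset.mem_union_left _ h
            · subst h; exact Finset.mem_union_right _ hpT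
      have h3 : Viol G A' n2 x2 Y p2 (R ∩ R2) := by
        refine ⟨Finset.inter_subset_left.trans hR.sub, ?_, ?_, ?_, ?_, ?_⟩
        · exact fun h => hR2.h1 (Finset.mem_inter.1 h).2
        · exact fun h => hR2.h2 (Finset.mem_inter.1 h).2
        · exact fun h => hR2.hp (Finset.mem_inter.1 h).2
        · intro r hr x hx ha
          rw [Finset.mem_inter] at hr ⊢
          rcases hR.bd r hr.1 x hx ha with h | h <;> rcases hR2.bd r hr.2 x hx ha with h' | h'
          · tauto
          · tauto
          · subst h; tauto
          · tauto
        · intro x hx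
          rw [Finset.mem_inter]
          rcases hR.hY x hx with h | h <;> rcases hR2.hY x hx with h' | h'
          · tauto
          · tauto
          · subst h; tauto
          · tauto
      have := hmin n2 hn2A hn2x hn2a _ _ h3
      have := hlt p2 hp2 hR2.hp
      omega
    · have h3 : Viol G A' n x2 Y p (R ∩ R2) := by
        refine ⟨Finset.inter_subset_left.trans hR.sub, ?_, ?_, ?_, ?_, ?_⟩
        · exact fun h => hR.h1 (Finset.mem_inter.1 h).1
        · exact fun h => hR.h2 (Finset.mem_inter.1 h).1
        · exact fun h => hR.hp (Finset.mem_inter.1 h).1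
        · intro r hr x hx ha
          rw [Finset.mem_inter] at hr ⊢
          rcases hR.bd r hr.1 x hx ha with h | h <;> rcases hR2.bd r hr.2 x hx ha with h' | h'
          · tauto
          · subst h'; tauto
          · tauto
          · tauto
        · intro x hx
          rw [Finset.mem_inter]
          rcases hR.hY x hx with h | h <;> rcases hR2.hY x hx with h' | h'
          · tauto
          · subst h'; tauto
          · tauto
          · tauto
      have := hmin n hn hnx ha _ _ h3
      have := hlt n2 hn2R hR2.h1
      omega

end HC

namespace HC
open Classical
variable {V : Type*} {G : SimpleGraph V}

noncomputable def Dset (G : SimpleGraph V) (X : Finset V) (u c : V) : Finset V :=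
  X.erase c \ reach G (X.erase c) u

theorem Dset_sub {X : Finset V} {u c : V} : Dset G X u c ⊆ X :=
  Finset.sdiff_subset.trans (Finset.erase_subset _ _)

theorem Dset_c {X : Finset V} {u c : V} : c ∉ Dset G X u c := by simp [Dset]

theorem Dset_u {X : Finset V} {u c : V} : u ∉ Dset G X u c := by
  intro h
  rw [Dset, Finset.mem_sdiff] at h
  exact h.2 (reach_self h.1)

theorem Dset_bd {X : Finset V} {u c : V} : Bd G X (Dset G X u c) c := by
  intro m hm x hx ha
  rw [Dset, Finset.mem_sdiff] at *
  by_cases hxc : x = c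
  · exact Or.inr hxc
  left
  have hx' : x ∈ X.erase c := Finset.mem_erase.2 ⟨hxc, hx⟩
  exact ⟨hx', fun h => hm.2 (reach_closed x h m hm.1 ha.symm)⟩

theorem X_struct {X : Finset V} {u : V} (hX : Conn G X u) (hXu : ∃ x ∈ X, x ≠ u) :
    ∃ c ∈ X, ∃ D ⊆ X, D.Nonempty ∧ u ∉ D ∧ c ∉ D ∧ (∀ z ∈ D, Leaf G X u c (reach G D z)) ∧
      ∀ x ∈ X, x ≠ c → x ∉ D → LP G ((X \ D).erase c) u x 0 := by
  have hex : ∃ k, ∃ c ∈ X, (Dset G X u c).Nonempty ∧ (Dset G X u c).card = k := by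
    obtain ⟨x, hx, hxu⟩ := hXu
    refine ⟨_, u, hX.1, ⟨x, ?_⟩, rfl⟩
    rw [Dset, Finset.mem_sdiff]
    refine ⟨Finset.mem_erase.2 ⟨hxu, hx⟩, fun h => ?_⟩
    have := (mem_reach.1 h).left
    simp at this
  obtain ⟨c, hc, hDne, hDc⟩ := Nat.find_spec hex
  have hmin : ∀ m ∈ X, (Dset G X u m).Nonempty → (Dset G X u c).card ≤ (Dset G X u m).card := by
    intro m hm hne
    rw [hDc]
    exact Nat.find_min' hex ⟨m, hm, hne, rfl⟩
  refine ⟨c, hc, Dset G X u c, Dset_sub, hDne, Dset_u, Dset_c, ?_, ?_⟩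
  · have hconn : Conn G (X \ Dset G X u c) u := hX.sdiff Dset_u Dset_bd
    intro z hz
    refine ⟨reach_sub.trans Dset_sub, ⟨z, reach_self hz⟩, fun h => Dset_u (reach_sub h), hc,
      fun h => Dset_c (reach_sub h), ?_, ?_⟩
    · intro m hm x hx ha
      rcases Dset_bd m (reach_sub hm) x hx ha with h | h
      · exact Or.inl (reach_closed m hm x h ha)
      · exact Or.inr h
    · intro M hM hMne m hb
      have hMD : M ⊆ Dset G X u c := hM.trans reach_sub
      have hbc : Bd G X M c := by
        by_contra hnb
        have hmM : m ∉ M := by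
          intro hmM
          apply hnb
          intro r hr x hx ha
          rcases hb r hr x hx ha with h | h
          · exact Or.inl h
          · subst h; exact Or.inl hmM
        have hmD : m ∈ Dset G X u c := by
          by_contra hmD
          apply hnb
          intro r hr x hx ha
          rcases hb r hr x hx ha with h | h
          · exact Or.inl h
          · rcases Dset_bd r (hMD hr) x hx ha with h' | h'
            · subst h; exact absurd h' hmD
            · exact Or.inr h'
        have hsub : M ⊆ Dset G X u m := by
          intro y hy
          rw [Dset, Finset.mem_sdiff]
          refine ⟨Finset.mem_erase.2 ⟨fun h => hmM (h ▸ hy), Dset_sub (hMD hy)⟩, fun h => ?_⟩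
          have := (mem_reach.1 h).symm.trap hy (by
            intro r hr x hx ha
            rw [Finset.mem_erase] at hx
            exact (hb r hr x hx.2 ha).resolve_right hx.1)
          exact Dset_u (hMD (Finset.mem_inter.1 this.right).2)
        have hle := hmin m (Dset_sub hmD) (hMne.mono hsub)
        have hlt : (Dset G X u m).card < (Dset G X u c).card := by
          apply Finset.card_lt_card
          refine ⟨?_, fun h => Dset_c (h hmD)⟩
          intro y hy
          by_contra hyD
          have h1 := hconn.2 y (Finset.mem_sdiff.2 ⟨Dset_sub hy, hyD⟩)
          rw [Dset, Finset.mem_sdiff] at hy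
          refine hy.2 (mem_reach.2 (h1.mono ?_ le_rfl))
          intro x hx
          rw [Finset.mem_sdiff] at hx
          exact Finset.mem_erase.2 ⟨fun h => hx.2 (h ▸ hmD), hx.1⟩
        omega
      have hcl : ∀ r ∈ M, ∀ x ∈ Dset G X u c, G.Adj r x → x ∈ M := by
        intro r hr x hx ha
        refine (hbc r hr x (Dset_sub hx) ha).resolve_right ?_
        rintro rfl
        exact Dset_c hx
      obtain ⟨m0, hm0⟩ := hMne
      have hzM := (Finset.mem_inter.1 ((mem_reach.1 (hM hm0)).symm.trap hm0 hcl).right).2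
      refine Finset.Subset.antisymm hM ?_
      intro y hy
      exact (Finset.mem_inter.1 ((mem_reach.1 hy).trap hzM hcl).right).2
  · intro x hx hxc hxD
    have hxr : x ∈ reach G (X.erase c) u := by
      by_contra h
      exact hxD (Finset.mem_sdiff.2 ⟨Finset.mem_erase.2 ⟨hxc, hx⟩, h⟩)
    refine (reach_LP hxr).mono ?_ le_rfl
    intro y hy
    have hy' := Finset.mem_erase.1 (reach_sub hy)
    refine Finset.mem_erase.2 ⟨hy'.1, Finset.mem_sdiff.2 ⟨hy'.2, fun h => ?_⟩⟩
    rw [Dset, Finset.mem_sdiff] at h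
    exact h.2 hy

theorem Leaf.adjc {X I : Finset V} {u c : V} (hX : Conn G X u) (h : Leaf G X u c I) :
    ∃ i ∈ I, G.Adj i c := by
  obtain ⟨i, hi, x, hx, hxI, ha⟩ := hX.bd h.sub h.ne h.hu
  have := (h.bd i hi x hx ha).resolve_left hxI
  subst this
  exact ⟨i, hi, ha⟩

theorem K_struct {K Y : Finset V} {v a b : V} (hK : Conn G K v) (hY : Y ⊆ K) (ha : a ∈ Y)
    (hb : b ∈ Y) (hab : a ≠ b) :
    ∃ c' I', Leaf G K v c' I' ∧ ((∀ y ∈ Y, y ∉ I') → c' ≠ v ∧ TwoP G (K \ I') c' v Y) := by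
  have hex : ∃ k, ∃ p J, Viol G K v v Y p J ∧ J.card = k := by
    refine ⟨_, v, K.erase v, ⟨Finset.erase_subset _ _, by simp, by simp, by simp, ?_, ?_⟩, rfl⟩
    · intro m hm x hx _
      rw [Finset.mem_erase]
      tauto
    · intro y hy
      rw [Finset.mem_erase]
      have := hY hy
      tauto
  obtain ⟨p, J, hJ, hJc⟩ := Nat.find_spec hex
  have hmin : ∀ p' J', Viol G K v v Y p' J' → J.card ≤ J'.card := by
    intro p' J' h
    rw [hJc]
    exact Nat.find_min' hex ⟨p', J', h, rfl⟩
  have hJne : J.Nonempty := by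
    rcases hJ.hY a ha with h | h
    · exact ⟨a, h⟩
    rcases hJ.hY b hb with h' | h'
    · exact ⟨b, h'⟩
    exact absurd (h.trans h'.symm) hab
  have hpK : p ∈ K := by
    obtain ⟨m, hm, x, hx, hxJ, hax⟩ := hK.bd hJ.sub hJne hJ.h1
    have := (hJ.bd m hm x hx hax).resolve_left hxJ
    subst this
    exact hx
  obtain ⟨I', hI'J, c', hL⟩ := leaf_exists hK hJ.sub hJne hJ.h1 hJ.bd
  refine ⟨c', I', hL, fun hYI => ?_⟩
  have hc'p : c' ≠ p := by
    rintro rfl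
    have hV : Viol G K v v Y c' (J \ I') := by
      refine ⟨Finset.sdiff_subset.trans hJ.sub, fun h => hJ.h1 (Finset.mem_sdiff.1 h).1,
        fun h => hJ.h1 (Finset.mem_sdiff.1 h).1, fun h => hJ.hp (Finset.mem_sdiff.1 h).1, ?_, ?_⟩
      · intro m hm x hx hax
        rw [Finset.mem_sdiff] at hm ⊢
        rcases hJ.bd m hm.1 x hx hax with h | h
        · left
          refine ⟨h, fun hxI => ?_⟩
          rcases hL.bd x hxI m (hJ.sub hm.1) hax.symm with h' | h'
          · exact hm.2 h'
          · subst h'; exact hJ.hp hm.1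
        · exact Or.inr h
      · intro y hy
        rw [Finset.mem_sdiff]
        have := hYI y hy
        rcases hJ.hY y hy with h | h <;> tauto
    have h1 := hmin _ _ hV
    obtain ⟨i, hi⟩ := hL.ne
    have h2 : (J \ I').card < J.card := Finset.card_lt_card
      ⟨Finset.sdiff_subset, fun h => (Finset.mem_sdiff.1 (h (hI'J hi))).2 hi⟩
    omega
  have hc'J : c' ∈ J := by
    obtain ⟨i, hi, hic⟩ := hL.adjc hK
    exact (hJ.bd i (hI'J hi) c' hL.hc hic).resolve_right hc'p
  have hc'v : c' ≠ v := fun h => hJ.h1 (h ▸ hc'J)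
  refine ⟨hc'v, menger _ _ _ _ _ le_rfl (Finset.mem_sdiff.2 ⟨hL.hc, hL.hcI⟩)
    (Finset.mem_sdiff.2 ⟨hK.1, hL.hu⟩) hc'v (fun y hy => Finset.mem_sdiff.2 ⟨hY hy, hYI y hy⟩) ?_⟩
  intro p2 J2 hV
  have hJ2K : J2 ⊆ K := hV.sub.trans Finset.sdiff_subset
  have hbd2 : Bd G K J2 p2 := by
    intro r hr x hx hax
    by_cases hxI : x ∈ I'
    · rcases hL.bd x hxI r (hJ2K hr) hax.symm with h | h
      · exact absurd h (Finset.mem_sdiff.1 (hV.sub hr)).2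
      · subst h; exact absurd hr hV.h1
    · exact hV.bd r hr x (Finset.mem_sdiff.2 ⟨hx, hxI⟩) hax
  have hlt : (J ∩ J2).card < J.card := by
    apply Finset.card_lt_card
    exact ⟨Finset.inter_subset_left, fun h => hV.h1 (Finset.mem_inter.1 (h hc'J)).2⟩
  by_cases hp2 : p2 ∈ J
  · have hpJ2 : p ∉ J2 := by
      intro hp
      have hc := hK.sdiff hJ.h1 hJ.bd
      have := (hc.2 p (Finset.mem_sdiff.2 ⟨hpK, hJ.hp⟩)).symm.trap hp (by
        intro r hr x hx hax
        rw [Finset.mem_sdiff] at hx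
        rcases hbd2 r hr x hx.1 hax with h | h
        · exact h
        · subst h; exact absurd hp2 hx.2)
      exact hV.h2 (Finset.mem_inter.1 this.right).2
    have h3 : Viol G K v v Y p2 (J ∩ J2) := by
      refine ⟨Finset.inter_subset_left.trans hJ.sub, ?_, ?_, ?_, ?_, ?_⟩
      · exact fun h => hJ.h1 (Finset.mem_inter.1 h).1
      · exact fun h => hJ.h1 (Finset.mem_inter.1 h).1
      · exact fun h => hV.hp (Finset.mem_inter.1 h).2
      · intro r hr x hx hax
        rw [Finset.mem_inter] at hr ⊢
        rcases hJ.bd r hr.1 x hx hax with h | h <;> rcases hbd2 r hr.2 x hx hax with h' | h'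
        · tauto
        · tauto
        · subst h; tauto
        · tauto
      · intro x hx
        rw [Finset.mem_inter]
        rcases hJ.hY x hx with h | h <;> rcases hV.hY x hx with h' | h'
        · tauto
        · tauto
        · subst h; tauto
        · tauto
    have := hmin _ _ h3
    omega
  · have h3 : Viol G K v v Y p (J ∩ J2) := by
      refine ⟨Finset.inter_subset_left.trans hJ.sub, ?_, ?_, ?_, ?_, ?_⟩
      · exact fun h => hJ.h1 (Finset.mem_inter.1 h).1
      · exact fun h => hJ.h1 (Finset.mem_inter.1 h).1
      · exact fun h => hJ.hp (Finset.mem_inter.1 h).1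
      · intro r hr x hx hax
        rw [Finset.mem_inter] at hr ⊢
        rcases hJ.bd r hr.1 x hx hax with h | h <;> rcases hbd2 r hr.2 x hx hax with h' | h'
        · tauto
        · subst h'; tauto
        · tauto
        · tauto
      · intro x hx
        rw [Finset.mem_inter]
        rcases hJ.hY x hx with h | h <;> rcases hV.hY x hx with h' | h'
        · tauto
        · subst h'; tauto
        · tauto
        · tauto
    have := hmin _ _ h3
    omega

theorem Leaf.ext {X I : Finset V} {u c t : V} {L : ℕ} (hX : Conn G X u) (h : Leaf G X u c I)
    (hp : LP G (insert c I) c t L) : LP G X u t L := by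
  have h1 := (hX.sdiff h.hu h.bd).2 c (Finset.mem_sdiff.2 ⟨h.hc, h.hcI⟩)
  refine h1.glue hp Finset.sdiff_subset h.insert_sub ?_ (by omega)
  intro x hx hx'
  rw [Finset.mem_sdiff] at hx
  rcases Finset.mem_insert.1 hx' with h | h
  · exact h
  · exact absurd h hx.2

theorem Leaf.nw {X I : Finset V} {u c w : V} (h : Leaf G X u c I)
    (hw : w ∈ X → w ≠ u → 2 ≤ HC.deg G X w) : ∃ z ∈ I, z ≠ w := by
  by_contra hcon
  push Not at hcon
  obtain ⟨z, hz⟩ := h.ne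
  have hzw := hcon z hz
  subst hzw
  have h1 := hw (h.sub hz) (fun h' => h.hu (h' ▸ hz))
  have h2 := h.deg hz
  have h3 := deg_card (G := G) (Finset.mem_insert_of_mem (b := c) hz)
  have h4 : insert c I ⊆ {c, z} := by
    intro x hx
    rcases Finset.mem_insert.1 hx with h | h
    · simp [h]
    · simp [hcon x h]
  have := (Finset.card_le_card h4).trans Finset.card_le_two
  omega

def TwoN (G : SimpleGraph V) (K I : Finset V) : Prop :=
  ∃ k ∈ K, ∃ k' ∈ K, k ≠ k' ∧ (∃ i ∈ I, G.Adj i k) ∧ ∃ i ∈ I, G.Adj i k'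

theorem step {X K : Finset V} {u v w : V} {e : ℕ} (he : 3 ≤ e) (hD : ∀ N, D3 G e N)
    (hdis : ∀ x ∈ X, x ∉ K) (hX : Conn G X u) (hK : Conn G K v) (hw : w ∉ X)
    (hdX : ∀ x ∈ X, x ≠ u → e ≤ deg G X x) (hdK : ∀ x ∈ K, x ≠ v → x ≠ w → e ≤ deg G K x)
    (hwK : w ∈ K → w ≠ v → 2 ≤ deg G K w)
    (hmat : ∀ x ∈ X, ∀ k ∈ K, ∀ k' ∈ K, G.Adj x k → G.Adj x k' → k = k')
    (hA : ∀ I ⊆ X, I.Nonempty → u ∉ I → ∀ c, Bd G X I c → TwoN G K I)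
    (hB : ∀ I ⊆ K, I.Nonempty → v ∉ I → ∀ c, Bd G K I c → TwoN G X I)
    (hXu : ∃ x ∈ X, x ≠ u) : LP G (X ∪ K) u v (2 * f e + 1) := by
  obtain ⟨c, hc, D, hDX, hDne, huD, hcD, hleaf, hreach⟩ := X_struct hX hXu
  obtain ⟨z0, hz0⟩ := hDne
  have hI := hleaf z0 hz0
  set I := reach G D z0 with hIdef
  set Y := K.filter (fun k => ∃ i ∈ I, G.Adj i k) with hYdef
  obtain ⟨a, haK, b, hbK, hab, hai, hbi⟩ := hA I hI.sub hI.ne hI.hu c hI.bd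
  have hYK : Y ⊆ K := Finset.filter_subset _ _
  obtain ⟨c', I', hL, hL2⟩ := K_struct hK hYK (Finset.mem_filter.2 ⟨haK, hai⟩)
    (Finset.mem_filter.2 ⟨hbK, hbi⟩) hab
  have hlongK : ∀ y' ∈ I', LP G (insert c' I') c' y' (f e) := by
    intro y' hy'
    exact hL.path1 (hD _) he (Nat.lt_succ_self _) hy'
      (fun x hx hxw => hdK x (hL.sub hx) (fun h => hL.hu (h ▸ hx)) hxw) (hL.nw hwK)
  by_cases hP0 : ∃ y ∈ D, ∃ y' ∈ I', G.Adj y y'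
  · obtain ⟨y, hy, y', hy', hadj⟩ := hP0
    have hLy := hleaf y hy
    have h1 := hLy.ext hX (hLy.path1 (t := y) (w := w) (hD _) he (Nat.lt_succ_self _)
      (reach_self hy) (fun x hx _ => hdX x (hLy.sub hx) (fun h => hLy.hu (h ▸ hx)))
      ⟨y, reach_self hy, fun h => hw (h ▸ hDX hy)⟩)
    have h2 := hL.ext hK (hlongK y' hy')
    exact h1.join hadj h2.symm Finset.subset_union_left Finset.subset_union_right hdis (by omega)
  push Not at hP0
  have hYI : ∀ y ∈ Y, y ∉ I' := by
    intro y hy hyI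
    obtain ⟨i, hi, hiy⟩ := (Finset.mem_filter.1 hy).2
    exact hP0 i (reach_sub hi) y hyI hiy
  obtain ⟨hc'v, y1, hy1, y2, hy2, hy12, A1, hA1, A2, hA2, hA12, hl1, hl2⟩ := hL2 hYI
  obtain ⟨ia, hia, hia1⟩ := (Finset.mem_filter.1 hy1).2
  obtain ⟨ib, hib, hib2⟩ := (Finset.mem_filter.1 hy2).2
  have hiab : ia ≠ ib := by
    rintro rfl
    exact hy12 (hmat ia (hI.sub hia) y1 (hYK hy1) y2 (hYK hy2) hia1 hib2)
  have hz : ∃ z ∈ X, z ≠ c ∧ ∃ z' ∈ I', G.Adj z z' := by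
    obtain ⟨z1, hz1, z2, hz2, hne, ⟨i1, hi1, ha1⟩, i2, hi2, ha2⟩ :=
      hB I' hL.sub hL.ne hL.hu c' hL.bd
    by_cases h : z1 = c
    · exact ⟨z2, hz2, fun h' => hne (h.trans h'.symm), i2, hi2, ha2.symm⟩
    · exact ⟨z1, hz1, h, i1, hi1, ha1.symm⟩
  obtain ⟨z, hzX, hzc, z', hz', hzz'⟩ := hz
  have hzD : z ∉ D := fun h => hP0 z h z' hz' hzz'
  have hq0 := hreach z hzX hzc hzD
  have hq1 := (hlongK z' hz').symm
  have hA1K : A1 ⊆ K := hA1.trans Finset.sdiff_subset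
  have hA2K : A2 ⊆ K := hA2.trans Finset.sdiff_subset
  have hq2 : LP G (I' ∪ A1) z' y1 (f e) := by
    refine hq1.glue hl1 ?_ Finset.subset_union_right ?_ (by omega)
    · intro x hx
      rcases Finset.mem_insert.1 hx with rfl | h
      · exact Finset.mem_union_right _ hl1.left
      · exact Finset.mem_union_left _ h
    · intro x hx hx'
      rcases Finset.mem_insert.1 hx with h | h
      · exact h
      · exact absurd h (Finset.mem_sdiff.1 (hA1 hx')).2
  have hIA : I' ∪ A1 ⊆ K := Finset.union_subset hL.sub hA1K
  have hq3 := hI.path2 (hD _) he hX (Nat.lt_succ_self _) hia hib hiab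
    (fun x hx => hdX x (hI.sub hx) (fun h => hI.hu (h ▸ hx)))
  have hcI : insert c I ⊆ X := hI.insert_sub
  have hq4 : LP G (insert c I ∪ (I' ∪ A1)) z' ib (2 * f e + 1) := by
    refine hq2.join hia1.symm hq3 Finset.subset_union_right Finset.subset_union_left ?_ (by omega)
    intro x hx hx'
    exact hdis x (hcI hx') (hIA hx)
  have hq5 : LP G (insert c I ∪ (I' ∪ A1) ∪ A2) z' v (2 * f e + 1) := by
    refine hq4.join hib2 hl2.symm Finset.subset_union_left Finset.subset_union_right ?_ (by omega)
    intro x hx hx'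
    rcases Finset.mem_union.1 hx with h | h
    · exact hdis x (hcI h) (hA2K hx')
    · rcases Finset.mem_union.1 h with h | h
      · exact (Finset.mem_sdiff.1 (hA2 hx')).2 h
      · exact hA12 x h hx'
  refine hq0.join hzz' hq5 ?_ ?_ ?_ (by omega)
  · exact ((Finset.erase_subset _ _).trans Finset.sdiff_subset).trans Finset.subset_union_left
  · intro x hx
    rcases Finset.mem_union.1 hx with h | h
    · rcases Finset.mem_union.1 h with h | h
      · exact Finset.mem_union_left _ (hcI h)
      · exact Finset.mem_union_right _ (hIA h)
    · exact Finset.mem_union_right _ (hA2K h)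
  · intro x hx hx'
    rw [Finset.mem_erase, Finset.mem_sdiff] at hx
    rcases Finset.mem_union.1 hx' with h | h
    · rcases Finset.mem_union.1 h with h | h
      · rcases Finset.mem_insert.1 h with h | h
        · exact hx.1 h
        · exact hx.2.2 (reach_sub h)
      · exact hdis x hx.2.1 (hIA h)
    · exact hdis x hx.2.1 (hA2K h)

end HC

namespace HC
open Classical
variable {V : Type*} {G : SimpleGraph V}

theorem Leaf.path1' {X I : Finset V} {u c t w : V} {e N : ℕ} (hD : D3 G e N)
    (h : Leaf G X u c I) (hN : (insert c I).card < N) (ht : t ∈ I)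
    (hd : ∀ x ∈ I, x ≠ t → x ≠ w → e ≤ HC.deg G X x) (hw : ∃ z ∈ I, 3 ≤ HC.deg G X z) :
    LP G (insert c I) c t (f e) := by
  refine hD _ hN c t w (Finset.mem_insert_self _ _) (Finset.mem_insert_of_mem ht) ?_ (h.CH1 ht) ?_ ?_
  · rintro rfl; exact h.hcI ht
  · intro x hx hxc hxt hxw
    have hxI := (Finset.mem_insert.1 hx).resolve_left hxc
    exact (hd x hxI hxt hxw).trans (h.deg hxI)
  · obtain ⟨z, hz, hzw⟩ := hw
    have h1 := hzw.trans (h.deg hz)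
    have h2 := deg_card (G := G) (Finset.mem_insert_of_mem (b := c) hz)
    exact exists_fourth (by omega) c t w

theorem deg_union_le {A B : Finset V} {x : V} : deg G (A ∪ B) x ≤ deg G A x + deg G B x := by
  unfold deg
  rw [Finset.filter_union]
  exact Finset.card_union_le _ _

theorem deg_le_one {B : Finset V} {x : V}
    (h : ∀ k ∈ B, ∀ k' ∈ B, G.Adj x k → G.Adj x k' → k = k') : deg G B x ≤ 1 := by
  unfold deg
  rw [Finset.card_le_one]
  intro a ha b hb
  rw [Finset.mem_filter] at ha hb
  exact h a ha.1 b hb.1 ha.2 hb.2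

theorem deg_zero {B : Finset V} {x : V} (h : ∀ k ∈ B, ¬ G.Adj x k) : deg G B x = 0 := by
  unfold deg
  rw [Finset.card_eq_zero, Finset.filter_eq_empty_iff]
  exact fun k hk => h k hk

theorem deg_mono' {A B : Finset V} {x : V} (h : ∀ k ∈ A, G.Adj x k → k ∈ B) :
    deg G A x ≤ deg G B x := by
  apply Finset.card_le_card
  intro k hk
  rw [Finset.mem_filter] at hk ⊢
  exact ⟨h k hk.1 hk.2, hk.2⟩

/-- the second half of the core, for a possibly reduced `K'` -/
theorem coreB {X K K' : Finset V} {u v w1 c' m x : V} {e N : ℕ} {I : Finset V} (he : 3 ≤ e)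
    (hIH : D3 G (e + 1) N) (hN : (X ∪ K).card ≤ N)
    (hdis : ∀ x ∈ X, x ∉ K) (hX : Conn G X u) (hK' : Conn G K' v) (hKK : K' ⊆ K)
    (hdeg : ∀ k ∈ K', k ≠ v → k ≠ w1 → e + 1 ≤ deg G (X ∪ K) k ∧ ∀ y ∈ K, G.Adj k y → y ∈ K')
    (hwK : w1 ∈ K' → w1 ≠ v → 2 ≤ deg G K' w1)
    (hmat : ∀ x ∈ X, ∀ k ∈ K, ∀ k' ∈ K, G.Adj x k → G.Adj x k' → k = k')
    (hmat' : ∀ k ∈ K, ∀ x ∈ X, ∀ x' ∈ X, G.Adj k x → G.Adj k x' → x = x')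
    (hL : Leaf G K' v c' I) (hm : m ∈ I) (hx : x ∈ X) (hmx : G.Adj m x)
    (hT : ¬ TwoN G X I) : LP G (X ∪ K) u v (f (e + 1)) := by
  have hcard : (insert c' I).card < N := by
    refine lt_of_lt_of_le (Finset.card_lt_card ⟨?_, ?_⟩) hN
    · exact (hL.insert_sub.trans hKK).trans Finset.subset_union_right
    · intro h
      have := h (Finset.mem_union_left _ hX.1)
      exact hdis u hX.1 (hKK (hL.insert_sub this))
  have hdK : ∀ k ∈ K', k ≠ v → k ≠ w1 → deg G (X ∪ K) k ≤ deg G X k + deg G K' k := by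
    intro k hk hkv hkw
    refine deg_union_le.trans ?_
    have := deg_mono' (hdeg k hk hkv hkw).2
    omega
  have h1 : LP G (insert c' I) c' m (f (e + 1)) := by
    refine hL.path1' (w := w1) hIH hcard hm ?_ ?_
    · intro i hi him hiw
      have hiv : i ≠ v := fun h => hL.hu (h ▸ hi)
      have h2 := hdK i (hL.sub hi) hiv hiw
      have h3 := (hdeg i (hL.sub hi) hiv hiw).1
      have h4 : deg G X i = 0 := by
        apply deg_zero
        intro k hk hik
        by_cases hkx : k = x
        · subst hkx
          exact him (hmat k hk i (hKK (hL.sub hi)) m (hKK (hL.sub hm)) hik.symm hmx.symm)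
        · exact hT ⟨k, hk, x, hx, hkx, ⟨i, hi, hik⟩, m, hm, hmx⟩
      omega
    · obtain ⟨z, hz, hzw⟩ := hL.nw hwK
      refine ⟨z, hz, ?_⟩
      have hzv : z ≠ v := fun h => hL.hu (h ▸ hz)
      have h2 := hdK z (hL.sub hz) hzv hzw
      have h3 := (hdeg z (hL.sub hz) hzv hzw).1
      have h4 : deg G X z ≤ 1 := deg_le_one (hmat' z (hKK (hL.sub hz)))
      omega
  have h2 := hL.ext hK' h1
  exact (hX.2 x hx).join hmx.symm h2.symm Finset.subset_union_left
    (hKK.trans Finset.subset_union_right) (fun y hy hy' => hdis y hy (hKK hy')) (by omega)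

theorem core {X K : Finset V} {u v w : V} {e N : ℕ} (he : 3 ≤ e) (hD : ∀ N, D3 G e N)
    (hIH : D3 G (e + 1) N) (hN : (X ∪ K).card ≤ N)
    (hdis : ∀ x ∈ X, x ∉ K) (hX : Conn G X u) (hK : Conn G K v) (hw : w ∉ X)
    (hCH : CH G (X ∪ K) u v)
    (hdeg : ∀ x ∈ X ∪ K, x ≠ u → x ≠ v → x ≠ w → e + 1 ≤ deg G (X ∪ K) x)
    (hmat : ∀ x ∈ X, ∀ k ∈ K, ∀ k' ∈ K, G.Adj x k → G.Adj x k' → k = k')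
    (hmat' : ∀ k ∈ K, ∀ x ∈ X, ∀ x' ∈ X, G.Adj k x → G.Adj k x' → x = x')
    (hnt : ∃ x ∈ X ∪ K, x ≠ u ∧ x ≠ v ∧ x ≠ w) : LP G (X ∪ K) u v (f (e + 1)) := by
  by_contra hgoal
  have hdX1 : ∀ x ∈ X, x ≠ u → e + 1 ≤ deg G (X ∪ K) x := by
    intro x hx hxu
    exact hdeg x (Finset.mem_union_left _ hx) hxu (fun h => hdis x hx (h ▸ hK.1))
      (fun h => hw (h ▸ hx))
  have hdX : ∀ x ∈ X, x ≠ u → e ≤ deg G X x := by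
    intro x hx hxu
    have h1 := hdX1 x hx hxu
    have h2 := deg_union_le (G := G) (A := X) (B := K) (x := x)
    have h3 := deg_le_one (hmat x hx)
    omega
  have hA3 : ∀ I ⊆ X, I.Nonempty → u ∉ I → ∀ c, Bd G X I c → ∀ y1 y2, ∃ i ∈ I, ∃ k ∈ K,
      G.Adj i k ∧ i ≠ y1 ∧ i ≠ y2 := by
    intro I0 hI0 hI0ne huI0 c0 hb0 y1 y2
    by_contra hcon
    push Not at hcon
    obtain ⟨I, hII, c, hL⟩ := leaf_exists hX hI0 hI0ne huI0 hb0
    have hCHI := hCH I (hL.sub.trans Finset.subset_union_left) hL.ne hL.hu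
      (fun h => hdis v (hL.sub h) hK.1) c
    unfold Bd at hCHI
    push Not at hCHI
    obtain ⟨m, hm, k, hk, hmk, hkI, hkc⟩ := hCHI
    have hkK : k ∈ K := by
      rcases Finset.mem_union.1 hk with h | h
      · rcases hL.bd m hm k h hmk with h' | h'
        · exact absurd h' hkI
        · exact absurd h' hkc
      · exact h
    have hmu : m ≠ u := fun h => hL.hu (h ▸ hm)
    have hcard : (insert c I).card < N := by
      refine lt_of_lt_of_le (Finset.card_lt_card ⟨?_, ?_⟩) hN
      · exact hL.insert_sub.trans Finset.subset_union_left
      · intro h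
        exact hdis v (hL.insert_sub (h (Finset.mem_union_right _ hK.1))) hK.1
    have h1 : LP G (insert c I) c m (f (e + 1)) := by
      refine hL.path1' (w := if m = y1 then y2 else y1) hIH hcard hm ?_
        ⟨m, hm, he.trans (hdX m (hL.sub hm) hmu)⟩
      intro i hi him hiw
      have h1 := hdX1 i (hL.sub hi) (fun h => hL.hu (h ▸ hi))
      have h2 := deg_union_le (G := G) (A := X) (B := K) (x := i)
      have h3 : deg G K i = 0 := by
        apply deg_zero
        intro k' hk' hik'
        have h4 := hcon i (hII hi) k' hk' hik'
        have h5 := hcon m (hII hm) k hkK hmk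
        split_ifs at hiw with h6
        · exact hiw (h4 (fun h => him (h.trans h6.symm)))
        · exact him ((h4 hiw).trans (h5 h6).symm)
      omega
    apply hgoal
    exact (hL.ext hX h1).join hmk (hK.2 k hkK).symm Finset.subset_union_left
      Finset.subset_union_right hdis (by omega)
  have hA2 : ∀ I ⊆ X, I.Nonempty → u ∉ I → ∀ c, Bd G X I c → TwoN G (K.erase w) I := by
    intro I hI hne hu c hb
    obtain ⟨y, hy⟩ : ∃ y, ∀ x ∈ X, G.Adj x w → w ∈ K → x = y := by
      by_cases h : ∃ y ∈ X, G.Adj y w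
      · obtain ⟨y, hy, hyw⟩ := h
        exact ⟨y, fun x hx hxw hwK => hmat' w hwK x hx y hy hxw.symm hyw.symm⟩
      · push Not at h
        exact ⟨u, fun x hx hxw => absurd hxw (h x hx)⟩
    obtain ⟨i1, hi1, k1, hk1, ha1, hn1, _⟩ := hA3 I hI hne hu c hb y y
    obtain ⟨i2, hi2, k2, hk2, ha2, hn2, hn3⟩ := hA3 I hI hne hu c hb y i1
    refine ⟨k1, ?_, k2, ?_, ?_, ⟨i1, hi1, ha1⟩, i2, hi2, ha2⟩
    · refine Finset.mem_erase.2 ⟨?_, hk1⟩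
      rintro rfl
      exact hn1 (hy i1 (hI hi1) ha1 hk1)
    · refine Finset.mem_erase.2 ⟨?_, hk2⟩
      rintro rfl
      exact hn2 (hy i2 (hI hi2) ha2 hk2)
    · rintro rfl
      exact hn3 (hmat' k1 hk1 i2 (hI hi2) i1 (hI hi1) ha2.symm ha1.symm)
  have hdK1 : ∀ x ∈ K, x ≠ v → x ≠ w → e + 1 ≤ deg G (X ∪ K) x := by
    intro x hx hxv hxw
    exact hdeg x (Finset.mem_union_right _ hx) (fun h => hdis u hX.1 (h ▸ hx)) hxv hxw
  -- finishing with a given K'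
  have hfin : ∀ K' w1, Conn G K' v → K' ⊆ K → K.erase w ⊆ K' → w1 ∉ X →
      (∀ k ∈ K', k ≠ v → k ≠ w1 → e + 1 ≤ deg G (X ∪ K) k ∧ ∀ y ∈ K, G.Adj k y → y ∈ K') →
      (w1 ∈ K' → w1 ≠ v → 2 ≤ deg G K' w1) →
      (∀ I c', Leaf G K' v c' I → (∃ m ∈ I, ∃ x ∈ X, G.Adj m x) ∨ LP G (X ∪ K) u v (f (e + 1))) →
      False := by
    intro K' w1 hK' hKK hKw hw1 hdeg' hwK hcase
    have hB : ∀ I ⊆ K', I.Nonempty → v ∉ I → ∀ c, Bd G K' I c → TwoN G X I := by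
      intro I0 hI0 hne hv c0 hb
      by_contra hT
      obtain ⟨I, hII, c, hL⟩ := leaf_exists hK' hI0 hne hv hb
      rcases hcase I c hL with ⟨m, hm, x, hx, hmx⟩ | h
      · refine hgoal (coreB he hIH hN hdis hX hK' hKK hdeg' hwK hmat hmat' hL hm hx hmx ?_)
        rintro ⟨k, hk, k', hk', hkk, ⟨i, hi, hik⟩, j, hj, hjk⟩
        exact hT ⟨k, hk, k', hk', hkk, ⟨i, hII hi, hik⟩, j, hII hj, hjk⟩
      · exact hgoal h
    have hXu : ∃ x ∈ X, x ≠ u := by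
      by_contra hcon
      push Not at hcon
      obtain ⟨x, hx, hxu, hxv, hxw⟩ := hnt
      have hxK : x ∈ K := by
        rcases Finset.mem_union.1 hx with h | h
        · exact absurd (hcon x h) hxu
        · exact h
      have hxK' : x ∈ K' := hKw (Finset.mem_erase.2 ⟨hxw, hxK⟩)
      obtain ⟨k, hk, k', hk', hkk, _⟩ := hB (K'.erase v) (Finset.erase_subset _ _)
        ⟨x, Finset.mem_erase.2 ⟨hxv, hxK'⟩⟩ (by simp) v (by
          intro m hm y hy _
          rw [Finset.mem_erase]
          tauto)
      exact hkk ((hcon k hk).trans (hcon k' hk').symm)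
    apply hgoal
    have := step (w := w1) he hD (fun x hx h => hdis x hx (hKK h)) hX hK' hw1 hdX ?_ hwK
      (fun x hx k hk k' hk' => hmat x hx k (hKK hk) k' (hKK hk')) ?_ hB hXu
    · rw [f_succ (by omega)]
      exact this.mono (Finset.union_subset_union subset_rfl hKK) le_rfl
    · intro k hk hkv hkw
      have h1 := (hdeg' k hk hkv hkw).1
      have h2 := deg_mono' (hdeg' k hk hkv hkw).2
      have h3 := deg_union_le (G := G) (A := X) (B := K) (x := k)
      have h4 := deg_le_one (hmat' k (hKK hk))
      omega
    · intro I hI hne hu c hb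
      obtain ⟨k, hk, k', hk', h⟩ := hA2 I hI hne hu c hb
      exact ⟨k, hKw hk, k', hKw hk', h⟩
  by_cases hcase : w ∈ K ∧ w ≠ v ∧ deg G K w ≤ 1
  · obtain ⟨hwK, hwv, hdw⟩ := hcase
    obtain ⟨m, hm, w0, hw0K, hw0w, hww0⟩ := hK.bd (M := {w}) (by simpa using hwK) (by simp)
      (by simpa using hwv.symm)
    rw [Finset.mem_singleton] at hm hw0w
    subst hm
    have huniq : ∀ y ∈ K, G.Adj m y → y = w0 := by
      intro y hy hay
      unfold deg at hdw
      exact Finset.card_le_one.1 hdw y (Finset.mem_filter.2 ⟨hy, hay⟩) w0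
        (Finset.mem_filter.2 ⟨hw0K, hww0⟩)
    have hK' : Conn G (K.erase m) v := by
      have := hK.sdiff (M := {m}) (c := w0) (by simpa using hwv.symm) (by
        intro r hr x hx ha
        rw [Finset.mem_singleton] at hr
        subst hr
        exact Or.inr (huniq x hx ha))
      rwa [Finset.sdiff_singleton_eq_erase] at this
    have hzw : ∃ z ∈ X, G.Adj m z := by
      have := hCH {m} (by simp [hwK]) (by simp) (by
        rw [Finset.mem_singleton]; rintro rfl; exact hw hX.1) (by simpa using hwv.symm) w0
      unfold Bd at this
      push Not at this
      obtain ⟨r, hr, x, hx, ha, hxm, hxw⟩ := this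
      rw [Finset.mem_singleton] at hr
      subst hr
      rcases Finset.mem_union.1 hx with h | h
      · exact ⟨x, h, ha⟩
      · exact absurd (huniq x h ha) hxw
    obtain ⟨z, hz, hmz⟩ := hzw
    have hdegK' : ∀ k ∈ K.erase m, k ≠ v → k ≠ w0 → e + 1 ≤ deg G (X ∪ K) k ∧
        ∀ y ∈ K, G.Adj k y → y ∈ K.erase m := by
      intro k hk hkv hkw
      rw [Finset.mem_erase] at hk
      refine ⟨hdK1 k hk.2 hkv hk.1, fun y hy hay => Finset.mem_erase.2 ⟨?_, hy⟩⟩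
      rintro rfl
      exact hkw (huniq k hk.2 hay.symm)
    have hw2 : w0 ∈ K.erase m → w0 ≠ v → 2 ≤ deg G (K.erase m) w0 := by
      intro _ hwv
      have h1 := hdK1 w0 hw0K hwv hw0w
      have h2 := deg_union_le (G := G) (A := X) (B := K) (x := w0)
      have h3 := deg_le_one (hmat' w0 hw0K)
      have h4 : deg G K w0 ≤ deg G (K.erase m) w0 + 1 := by
        have h5 : deg G K w0 ≤ deg G (K.erase m ∪ {m}) w0 := by
          apply deg_mono'
          intro k hk _
          simp only [Finset.mem_union, Finset.mem_erase, Finset.mem_singleton]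
          tauto
        have h6 := deg_union_le (G := G) (A := K.erase m) (B := {m}) (x := w0)
        have h7 : deg G {m} w0 ≤ 1 := (Finset.card_filter_le _ _).trans (by simp)
        omega
      omega
    refine hfin (K.erase m) w0 hK' (Finset.erase_subset _ _) subset_rfl
      (fun h => hdis w0 h hw0K) hdegK' hw2 ?_
    intro I c' hL
    by_cases hex : ∃ m ∈ I, ∃ x ∈ X, G.Adj m x
    · exact Or.inl hex
    right
    push Not at hex
    have hIK : I ⊆ K := hL.sub.trans (Finset.erase_subset _ _)
    have hw0I : w0 ∈ I := by
      have := hCH I (hIK.trans Finset.subset_union_right) hL.ne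
        (fun h => hdis u hX.1 (hIK h)) hL.hu c'
      unfold Bd at this
      push Not at this
      obtain ⟨r, hr, x, hx, ha, hxI, hxc⟩ := this
      rcases Finset.mem_union.1 hx with h | h
      · exact absurd ha (hex r hr x h)
      · by_cases hxm : x = m
        · subst hxm
          rwa [← huniq r (hIK hr) ha.symm]
        · rcases hL.bd r hr x (Finset.mem_erase.2 ⟨hxm, h⟩) ha with h' | h'
          · exact absurd h' hxI
          · exact absurd h' hxc
    have hd1 : ∀ i ∈ I, i ≠ w0 → e + 1 ≤ deg G (K.erase m) i := by
      intro i hi hiw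
      have hiv : i ≠ v := fun h => hL.hu (h ▸ hi)
      have h1 := hdegK' i (hL.sub hi) hiv hiw
      have h2 := deg_mono' h1.2
      have h3 := deg_union_le (G := G) (A := X) (B := K) (x := i)
      have h4 : deg G X i = 0 := deg_zero (hex i hi)
      omega
    have hcard : (insert c' I).card < N := by
      refine lt_of_lt_of_le (Finset.card_lt_card ⟨?_, ?_⟩) hN
      · exact (hL.insert_sub.trans (Finset.erase_subset _ _)).trans Finset.subset_union_right
      · intro h
        exact hdis u hX.1 (Finset.mem_of_mem_erase (hL.insert_sub (h (Finset.mem_union_left _ hX.1))))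
    have h1 : LP G (insert c' I) c' w0 (f (e + 1)) := by
      refine hL.path1' (w := w0) hIH hcard hw0I (fun i hi hiw _ => hd1 i hi hiw) ?_
      obtain ⟨y, hy, hyw⟩ := hL.nw hw2
      exact ⟨y, hy, by have := hd1 y hy hyw; omega⟩
    have h2 := hL.ext hK' h1
    have h3 : LP G K v m (f (e + 1)) := by
      refine h2.join hww0.symm (LP.refl (Finset.mem_singleton_self m)) (Finset.erase_subset _ _)
        (by simpa using hwK) ?_ (by omega)
      intro x hx
      rw [Finset.mem_singleton]
      exact (Finset.mem_erase.1 hx).1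
    exact (hX.2 z hz).join hmz.symm h3.symm Finset.subset_union_left Finset.subset_union_right
      hdis (by omega)
  · refine hfin K w hK subset_rfl (Finset.erase_subset _ _) hw
      (fun k hk hkv hkw => ⟨hdK1 k hk hkv hkw, fun y hy _ => hy⟩) ?_ ?_
    · intro h1 h2
      by_contra h3
      exact hcase ⟨h1, h2, by omega⟩
    · intro I c' hL
      left
      have := hCH I (hL.sub.trans Finset.subset_union_right) hL.ne
        (fun h => hdis u hX.1 (hL.sub h)) hL.hu c'
      unfold Bd at this
      push Not at this
      obtain ⟨r, hr, x, hx, ha, hxI, hxc⟩ := this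
      rcases Finset.mem_union.1 hx with h | h
      · exact ⟨r, hr, x, h, ha⟩
      · rcases hL.bd r hr x h ha with h' | h'
        · exact absurd h' hxI
        · exact absurd h' hxc

def MC (G : SimpleGraph V) : Prop :=
  ∀ u v : V, u ≠ v → ∃ side : V → Bool, side u ≠ side v ∧
    ∀ x y y', G.Adj x y → G.Adj x y' → side y ≠ side x → side y' ≠ side x → y = y'

theorem D3_succ (hmc : MC G) {e : ℕ} (he : 3 ≤ e) (hD : ∀ N, D3 G e N) (N : ℕ) :
    D3 G (e + 1) N := by
  induction N with
  | zero => intro S hS; omega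
  | succ N ih =>
    intro S hS u v w hu hv huv hCH hdeg hnt
    obtain ⟨side, hside, hcross⟩ := hmc u v huv
    set C := reach G (S.filter (fun x => side x = side u)) u with hC
    set K := reach G (S \ C) v with hK
    set X := S \ K with hX
    have hCside : ∀ x ∈ C, x ∈ S ∧ side x = side u := fun x hx => Finset.mem_filter.1 (reach_sub hx)
    have hCS : C ⊆ S := fun x hx => (hCside x hx).1
    have huC : u ∈ C := reach_self (Finset.mem_filter.2 ⟨hu, rfl⟩)
    have hvC : v ∈ S \ C := Finset.mem_sdiff.2 ⟨hv, fun h => hside (hCside v h).2.symm⟩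
    have hvK : v ∈ K := reach_self hvC
    have hKs : ∀ k ∈ K, k ∈ S ∧ k ∉ C := fun k hk => Finset.mem_sdiff.1 (reach_sub hk)
    have hCX : C ⊆ X := fun x hx => Finset.mem_sdiff.2 ⟨hCS hx, fun h => (hKs x h).2 hx⟩
    have hXK : X ∪ K = S := Finset.sdiff_union_of_subset (fun k hk => (hKs k hk).1)
    have hdis : ∀ x ∈ X, x ∉ K := fun x hx => (Finset.mem_sdiff.1 hx).2
    have hcr : ∀ x ∈ X, ∀ k ∈ K, G.Adj x k → x ∈ C ∧ side k ≠ side x := by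
      intro x hx k hk hxk
      rw [hX, Finset.mem_sdiff] at hx
      have hxC : x ∈ C := by
        by_contra h
        exact hx.2 (reach_closed k hk x (Finset.mem_sdiff.2 ⟨hx.1, h⟩) hxk.symm)
      refine ⟨hxC, fun h => (hKs k hk).2 ?_⟩
      exact reach_closed x hxC k (Finset.mem_filter.2 ⟨(hKs k hk).1, h.trans (hCside x hxC).2⟩) hxk
    have hKc : Conn G K v := ⟨hvK, fun x hx => reach_LP hx⟩
    have hXc : Conn G X u := by
      refine ⟨hCX huC, fun x hx => ?_⟩
      by_contra hno
      have huR : u ∉ reach G X x := fun h => hno (mem_reach.1 h).symm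
      refine hCH (reach G X x) (reach_sub.trans Finset.sdiff_subset) ⟨x, reach_self hx⟩ huR
        (fun h => hdis v (reach_sub h) hvK) u ?_
      intro r hr y hy hay
      left
      by_cases hyK : y ∈ K
      · exfalso
        have hrC := (hcr r (reach_sub hr) y hyK hay).1
        have h1 : LP G X u r 0 := (reach_LP hrC).mono hCX le_rfl
        exact huR (mem_reach.2 ((mem_reach.1 hr).trans h1.symm))
      · exact reach_closed r hr y (Finset.mem_sdiff.2 ⟨hy, hyK⟩) hay
    have hmat : ∀ x ∈ X, ∀ k ∈ K, ∀ k' ∈ K, G.Adj x k → G.Adj x k' → k = k' := by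
      intro x hx k hk k' hk' h h'
      exact hcross x k k' h h' (hcr x hx k hk h).2 (hcr x hx k' hk' h').2
    have hmat' : ∀ k ∈ K, ∀ x ∈ X, ∀ x' ∈ X, G.Adj k x → G.Adj k x' → x = x' := by
      intro k hk x hx x' hx' h h'
      exact hcross k x x' h h' (hcr x hx k hk h.symm).2.symm (hcr x' hx' k hk h'.symm).2.symm
    by_cases hw : w ∈ X
    · have hXK' : K ∪ X = S := by rw [Finset.union_comm, hXK]
      have := core (X := K) (K := X) (u := v) (v := u) (w := w) he hD ih
        (by rw [hXK']; omega) (fun x hx h => hdis x h hx) hKc hXc (hdis w hw)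
        (by
          rw [hXK']
          exact fun M hM hne h1 h2 => hCH M hM hne h2 h1)
        (by
          rw [hXK']
          exact fun x hx h1 h2 h3 => hdeg x hx h2 h1 h3) hmat' hmat
        (by
          rw [hXK']
          obtain ⟨x, hx, h1, h2, h3⟩ := hnt
          exact ⟨x, hx, h2, h1, h3⟩)
      rw [hXK'] at this
      exact this.symm
    · have := core (X := X) (K := K) (u := u) (v := v) (w := w) he hD ih
        (by rw [hXK]; omega) hdis hXc hKc hw (by rwa [hXK]) (by rwa [hXK]) hmat hmat' (by rwa [hXK])
      rwa [hXK] at this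

end HC

namespace HC
open Classical
variable {V : Type*} {G : SimpleGraph V}

theorem LP.uncons {A : Finset V} {s t : V} {L : ℕ} (h : LP G A s t (L + 1)) :
    ∃ r, G.Adj s r ∧ LP G (A.erase s) r t L := by
  obtain ⟨p, h1, h2, h3⟩ := h
  cases p with
  | nil => simp at h3
  | cons ha q =>
    rename_i r
    rw [SimpleGraph.Walk.cons_isPath_iff] at h1
    refine ⟨r, ha, q, h1.1, ?_, by simpa using h3⟩
    intro x hx
    refine Finset.mem_erase.2 ⟨fun h => h1.2 (h ▸ hx), h2 x (by simp [hx])⟩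

theorem LP.zero {A : Finset V} {s t : V} (h : LP G A s t 0) : s = t ∨ LP G A s t 1 := by
  by_cases hst : s = t
  · exact Or.inl hst
  right
  obtain ⟨p, h1, h2, h3⟩ := h
  refine ⟨p, h1, h2, ?_⟩
  cases p with
  | nil => exact absurd rfl hst
  | cons _ _ => simp

theorem LP.cons {A B : Finset V} {s r t : V} {L L' : ℕ} (ha : G.Adj s r) (h : LP G A r t L)
    (hs : s ∉ A) (hsB : s ∈ B) (hAB : A ⊆ B) (hL : L' ≤ L + 1) : LP G B s t L' := by
  refine (LP.refl (Finset.mem_singleton_self s)).join ha h (by simpa using hsB) hAB ?_ (by omega)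
  intro x hx
  rw [Finset.mem_singleton] at hx
  subst hx; exact hs

theorem LP.p1 {a : V} : LP G {a} a a 0 := LP.refl (by simp)
theorem LP.p2 {a b : V} (h : G.Adj a b) : LP G {a, b} a b 1 := LP.edge h
theorem LP.p3 {a b c : V} (h : G.Adj a b) (h' : G.Adj b c) (hac : a ≠ c) :
    LP G {a, b, c} a c 2 := by
  refine LP.cons h (LP.p2 h') ?_ (by simp) (by simp) (by omega)
  simp [h.ne, hac]
theorem LP.p4 {a b c d : V} (h : G.Adj a b) (h' : G.Adj b c) (h'' : G.Adj c d) (hac : a ≠ c)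
    (had : a ≠ d) (hbd : b ≠ d) : LP G {a, b, c, d} a d 3 := by
  refine LP.cons h (LP.p3 h' h'' hbd) ?_ (by simp) (by simp) (by omega)
  simp [h.ne, hac, had]

def Ear (G : SimpleGraph V) (S P : Finset V) (a b : V) (L : ℕ) : Prop :=
  ∃ x y A, A ⊆ S \ P ∧ LP G A x y L ∧ G.Adj a x ∧ G.Adj y b

theorem Ear.symm {S P : Finset V} {a b : V} {L : ℕ} (h : Ear G S P a b L) : Ear G S P b a L := by
  obtain ⟨x, y, A, h1, h2, h3, h4⟩ := h
  exact ⟨y, x, A, h1, h2.symm, h4.symm, h3.symm⟩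

theorem Ear.mono {S P : Finset V} {a b : V} {L L' : ℕ} (h : Ear G S P a b L) (hL : L' ≤ L) :
    Ear G S P a b L' := by
  obtain ⟨x, y, A, h1, h2, h3, h4⟩ := h
  exact ⟨x, y, A, h1, h2.mono subset_rfl hL, h3, h4⟩

theorem Ear.ins {S P P1 P2 : Finset V} {s a b t : V} {L L1 L2 L' : ℕ} (E : Ear G S P a b L)
    (h1 : LP G P1 s a L1) (h2 : LP G P2 b t L2) (hP1 : P1 ⊆ P) (hP2 : P2 ⊆ P) (hP : P ⊆ S)
    (hd : ∀ x ∈ P1, x ∉ P2) (hL : L' ≤ L1 + L2 + L + 2) : LP G S s t L' := by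
  obtain ⟨x, y, A, hA, hl, hax, hyb⟩ := E
  have hAP : ∀ z ∈ A, z ∉ P := fun z hz => (Finset.mem_sdiff.1 (hA hz)).2
  have hAS : A ⊆ S := hA.trans Finset.sdiff_subset
  have h3 : LP G (P1 ∪ A) s y (L1 + L + 1) :=
    h1.join hax hl Finset.subset_union_left Finset.subset_union_right
      (fun z hz hz' => hAP z hz' (hP1 hz)) le_rfl
  refine h3.join hyb h2 (Finset.union_subset (hP1.trans hP) hAS) (hP2.trans hP) ?_ (by omega)
  intro z hz hz'
  rcases Finset.mem_union.1 hz with h | h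
  · exact hd z h hz'
  · exact hAP z h (hP2 hz')

theorem attach {S P : Finset V} {u v x : V} (hCH : CH G S u v) (hu : u ∈ P) (hv : v ∈ P)
    (hx : x ∈ S \ P) (c : V) :
    ∃ m ∈ reach G (S \ P) x, ∃ b ∈ P, b ∈ S ∧ b ≠ c ∧ G.Adj m b := by
  have hsub : reach G (S \ P) x ⊆ S \ P := reach_sub
  have := hCH (reach G (S \ P) x) (hsub.trans Finset.sdiff_subset) ⟨x, reach_self hx⟩
    (fun h => (Finset.mem_sdiff.1 (hsub h)).2 hu) (fun h => (Finset.mem_sdiff.1 (hsub h)).2 hv) c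
  unfold Bd at this
  push Not at this
  obtain ⟨m, hm, b, hb, ha, hbR, hbc⟩ := this
  refine ⟨m, hm, b, ?_, hb, hbc, ha⟩
  by_contra hbP
  exact hbR (reach_closed m hm b (Finset.mem_sdiff.2 ⟨hb, hbP⟩) ha)

theorem EL1 {S P : Finset V} {u v a x : V} (hCH : CH G S u v) (hu : u ∈ P) (hv : v ∈ P)
    (hx : x ∈ S \ P) (hax : G.Adj a x) : ∃ b ∈ P, b ≠ a ∧ Ear G S P a b 0 := by
  obtain ⟨m, hm, b, hb, hbS, hba, hmb⟩ := attach hCH hu hv hx a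
  exact ⟨b, hb, hba, x, m, _, reach_sub, reach_LP hm, hax, hmb⟩

theorem EL2 {S P : Finset V} {u v a x : V} (hCH : CH G S u v) (hu : u ∈ P) (hv : v ∈ P)
    (hx : x ∈ S \ P) (hax : G.Adj a x) :
    (∀ y ∈ S, G.Adj x y → y ∈ P) ∨ ∃ b ∈ P, b ≠ a ∧ Ear G S P a b 1 := by
  by_cases hall : ∀ y ∈ S, G.Adj x y → y ∈ P
  · exact Or.inl hall
  right
  push Not at hall
  obtain ⟨y, hy, hxy, hyP⟩ := hall
  have hP' : S \ insert x P ⊆ S \ P := Finset.sdiff_subset_sdiff subset_rfl (Finset.subset_insert _ _)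
  have hyS : y ∈ S \ insert x P := by
    simp only [Finset.mem_sdiff, Finset.mem_insert, not_or]
    exact ⟨hy, hxy.ne', hyP⟩
  obtain ⟨m, hm, b, hb, hbS, hbx, hmb⟩ := attach hCH (Finset.mem_insert_of_mem hu)
    (Finset.mem_insert_of_mem hv) hyS x
  have hbP : b ∈ P := (Finset.mem_insert.1 hb).resolve_left hbx
  have hl := reach_LP hm
  set R := reach G (S \ insert x P) y with hR
  have hRs : R ⊆ S \ insert x P := reach_sub
  have hxR : x ∉ R := fun h => by
    have := hRs h
    simp at this
  have hl2 : LP G (insert x R) x m 1 :=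
    LP.cons hxy hl hxR (by simp) (Finset.subset_insert _ _) (by omega)
  have hsub : insert x R ⊆ S \ P := Finset.insert_subset hx (hRs.trans hP')
  by_cases hba : b = a
  · subst hba
    obtain ⟨m', hm', b', hb', hb'S, hb'a, hmb'⟩ := attach hCH hu hv hx b
    rcases (reach_LP hm').zero with h | h
    · subst h
      exact ⟨b', hb', hb'a, m, x, _, hsub, hl2.symm, hmb.symm, hmb'⟩
    · exact ⟨b', hb', hb'a, x, m', _, reach_sub, h, hax, hmb'⟩
  · exact ⟨b, hbP, hba, x, m, _, hsub, hl2, hax, hmb⟩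

theorem third {S : Finset V} {a : V} (h : 3 ≤ deg G S a) (p q : V) :
    ∃ x ∈ S, G.Adj a x ∧ x ≠ p ∧ x ≠ q := by
  by_contra hcon
  push Not at hcon
  have : S.filter (G.Adj a) ⊆ {p, q} := by
    intro x hx
    rw [Finset.mem_filter] at hx
    have := hcon x hx.1 hx.2
    simp only [Finset.mem_insert, Finset.mem_singleton]
    tauto
  have := (Finset.card_le_card this).trans Finset.card_le_two
  unfold deg at h
  omega

/-- level two -/
theorem lev2 {S : Finset V} {u v x0 : V} (hu : u ∈ S) (hv : v ∈ S) (huv : u ≠ v)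
    (hCH : CH G S u v) (hx0 : x0 ∈ S) (h1 : x0 ≠ u) (h2 : x0 ≠ v) : LP G S u v 2 := by
  have hx : x0 ∈ S \ {u, v} := by simp [hx0, h1, h2]
  obtain ⟨m, hm, b, hb, hbS, hbu, hmb⟩ := attach hCH (by simp) (by simp) hx u
  obtain ⟨m', hm', b', hb', hbS', hbv, hmb'⟩ := attach hCH (by simp) (by simp) hx v
  have hbv : b = v := by simp at hb; tauto
  have hbu : b' = u := by simp at hb'; tauto
  subst hbv hbu
  have E : Ear G S {b', b} b' b 0 :=
    ⟨m', m, _, reach_sub, (reach_LP hm').symm.trans (reach_LP hm), hmb'.symm, hmb⟩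
  refine E.ins LP.p1 LP.p1 (by simp) (by simp) ?_ (by simpa using huv) (by omega)
  intro z hz
  simp at hz
  rcases hz with rfl | rfl <;> assumption

theorem D3_two (N : ℕ) : D3 G 2 N := by
  intro S _ u v w hu hv huv hCH _ hnt
  obtain ⟨x, hx, h1, h2, _⟩ := hnt
  exact lev2 hu hv huv hCH hx h1 h2

end HC

namespace HC
open Classical
variable {V : Type*} {G : SimpleGraph V}

theorem bool3 {p q r : Bool} (h : p ≠ q) (h' : q ≠ r) : p = r := by
  cases p <;> cases q <;> cases r <;> simp_all

structure Ctx (G : SimpleGraph V) (col : V → Bool) (S : Finset V) (u v w : V) : Prop where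
  hu : u ∈ S
  hv : v ∈ S
  huv : u ≠ v
  ch : CH G S u v
  deg3 : ∀ x ∈ S, x ≠ u → x ≠ v → x ≠ w → 3 ≤ deg G S x
  hcol : ∀ x y, G.Adj x y → col x ≠ col y

theorem Ctx.symm {col : V → Bool} {S : Finset V} {u v w : V} (h : Ctx G col S u v w) :
    Ctx G col S v u w :=
  ⟨h.hv, h.hu, h.huv.symm, fun M h1 h2 h3 h4 => h.ch M h1 h2 h4 h3,
    fun x hx h1 h2 => h.deg3 x hx h2 h1, h.hcol⟩

theorem lev3 {col : V → Bool} {S : Finset V} {u v w : V} (h : Ctx G col S u v w)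
    (hnt : ∃ x ∈ S, x ≠ u ∧ x ≠ v ∧ x ≠ w) : LP G S u v 3 := by
  by_contra hno
  obtain ⟨x0, hx0, hx0u, hx0v, hx0w⟩ := hnt
  have h2 := lev2 h.hu h.hv h.huv h.ch hx0 hx0u hx0v
  have key : ∀ a ∈ S, G.Adj u a → G.Adj a v → ∀ z, ¬ (Ear G S {u, a, v} a z 0 ∧ (z = u ∨ z = v)) := by
    rintro a ha hua hav z ⟨E, hz⟩
    have hPS : ({u, a, v} : Finset V) ⊆ S := by
      intro y hy
      simp only [Finset.mem_insert, Finset.mem_singleton] at hy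
      rcases hy with rfl | rfl | rfl
      exacts [h.hu, ha, h.hv]
    rcases hz with rfl | rfl
    · refine hno (E.symm.ins LP.p1 (LP.p2 hav) (by simp) (by intro; simp; tauto) hPS ?_ (by omega))
      simp [hua.ne, h.huv]
    · refine hno (E.ins (LP.p2 hua) LP.p1 (by intro; simp; tauto) (by simp) hPS ?_ (by omega))
      simp [hav.ne, h.huv]
  have hex : ∃ a ∈ S, G.Adj u a ∧ G.Adj a v ∧ a ≠ w := by
    obtain ⟨a, hua, h3⟩ := h2.uncons
    obtain ⟨b, hab, h4⟩ := h3.uncons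
    have haS := h3.left
    rw [Finset.mem_erase] at haS
    have hbv : b = v := by
      rcases h4.zero with h5 | h5
      · exact h5
      · exfalso
        apply hno
        refine LP.cons hua (LP.cons hab h5 (by simp) h3.left (Finset.erase_subset _ _) le_rfl)
          (by simp) h.hu (Finset.erase_subset _ _) (by omega)
    subst hbv
    by_cases haw : a = w
    · subst haw
      have hx : x0 ∈ S \ {u, a, b} := by simp [hx0, hx0u, hx0w, hx0v]
      obtain ⟨m, hm, z, hz, hzS, hza, hmz⟩ := attach h.ch (by simp) (by simp) hx a
      have hna : ∀ m' ∈ reach G (S \ {u, a, b}) x0, ¬ G.Adj m' a := by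
        intro m' hm' hma
        refine key a haS.2 hua hab z ⟨⟨m', m, _, reach_sub,
          (reach_LP hm').symm.trans (reach_LP hm), hma.symm, hmz⟩, ?_⟩
        simp at hz; tauto
      obtain ⟨m1, hm1, z1, hz1, hz1S, hz1u, hmz1⟩ := attach h.ch (by simp) (by simp) hx u
      obtain ⟨m2, hm2, z2, hz2, hz2S, hz2b, hmz2⟩ := attach h.ch (by simp) (by simp) hx b
      have hz1' : z1 = b := by
        simp only [Finset.mem_insert, Finset.mem_singleton] at hz1
        rcases hz1 with h | h | h
        · exact absurd h hz1u
        · subst h; exact absurd hmz1 (hna m1 hm1)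
        · exact h
      have hz2' : z2 = u := by
        simp only [Finset.mem_insert, Finset.mem_singleton] at hz2
        rcases hz2 with h | h | h
        · exact h
        · subst h; exact absurd hmz2 (hna m2 hm2)
        · exact absurd h hz2b
      subst hz1' hz2'
      have hmS := Finset.mem_sdiff.1 (reach_sub hm1)
      rcases ((reach_LP hm2).symm.trans (reach_LP hm1)).zero with h5 | h5
      · subst h5
        refine ⟨m2, hmS.1, hmz2.symm, hmz1, ?_⟩
        rintro rfl; simp at hmS
      · exfalso
        have E : Ear G S {z2, a, z1} z2 z1 1 := ⟨m2, m1, _, reach_sub, h5, hmz2.symm, hmz1⟩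
        refine hno (E.ins LP.p1 LP.p1 (by simp) (by simp) ?_ (by simpa using h.huv) (by omega))
        intro y hy
        simp only [Finset.mem_insert, Finset.mem_singleton] at hy
        rcases hy with rfl | rfl | rfl
        exacts [h.hu, haS.2, h.hv]
    · exact ⟨a, haS.2, hua, hab, haw⟩
  obtain ⟨a, ha, hua, hav, haw⟩ := hex
  obtain ⟨x, hx, hax, hxu, hxv⟩ := third (h.deg3 a ha hua.ne' hav.ne haw) u v
  have hxP : x ∈ S \ {u, a, v} := by simp [hx, hxu, hxv, hax.ne']
  obtain ⟨z, hz, hza, E⟩ := EL1 h.ch (by simp) (by simp) hxP hax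
  refine key a ha hua hav z ⟨E, ?_⟩
  simp at hz; tauto

structure P3 (G : SimpleGraph V) (S : Finset V) (u a b v : V) : Prop where
  ha : a ∈ S
  hb : b ∈ S
  ua : G.Adj u a
  ab : G.Adj a b
  bv : G.Adj b v
  ub : u ≠ b
  av : a ≠ v

theorem P3.symm {S : Finset V} {u a b v : V} (h : P3 G S u a b v) : P3 G S v b a u :=
  ⟨h.hb, h.ha, h.bv.symm, h.ab.symm, h.ua.symm, h.av.symm, h.ub.symm⟩

theorem lev4_claim {col : V → Bool} {S : Finset V} {u v w a b : V} (h : Ctx G col S u v w)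
    (hno : ¬ LP G S u v 4) (p : P3 G S u a b v) (haw : a ≠ w) : G.Adj a w ∧ w ∉ ({u, a, b, v} : Finset V) := by
  obtain ⟨ha, hb, ua, ab, bv, ub, av⟩ := p
  have huv := h.huv
  have hPS : ({u, a, b, v} : Finset V) ⊆ S := by
    intro y hy
    simp only [Finset.mem_insert, Finset.mem_singleton] at hy
    rcases hy with rfl | rfl | rfl | rfl
    exacts [h.hu, ha, hb, h.hv]
  obtain ⟨x, hx, hax, hxu, hxb⟩ := third (h.deg3 a ha ua.ne' av haw) u b
  have hxv : x ≠ v := by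
    rintro rfl
    have h1 := h.hcol _ _ ab
    have h2 := h.hcol _ _ bv
    have h3 := h.hcol _ _ hax
    exact h3 (bool3 h1 h2)
  have hxP : x ∈ S \ {u, a, b, v} := by simp [hx, hxu, hxv, hax.ne', hxb]
  have Eu : ¬ Ear G S {u, a, b, v} a u 0 := by
    intro E
    refine hno (E.symm.ins LP.p1 (LP.p3 ab bv av) (by simp) (by intro; simp; tauto) hPS ?_ (by omega))
    simp [ua.ne, ub, huv]
  have Eb : ¬ Ear G S {u, a, b, v} a b 0 := by
    intro E
    refine hno (E.ins (LP.p2 ua) (LP.p2 bv) (by intro; simp; tauto) (by intro; simp; tauto) hPS ?_ (by omega))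
    simp [ab.ne, ub, huv, av]
  have Ev : ¬ Ear G S {u, a, b, v} a v 1 := by
    intro E
    refine hno (E.ins (LP.p2 ua) LP.p1 (by intro; simp; tauto) (by simp) hPS ?_ (by omega))
    simp [huv, av]
  have hall : ∀ y ∈ S, G.Adj x y → y ∈ ({u, a, b, v} : Finset V) := by
    rcases EL2 h.ch (by simp) (by simp) hxP hax with h1 | ⟨z, hz, hza, E⟩
    · exact h1
    · exfalso
      simp only [Finset.mem_insert, Finset.mem_singleton] at hz
      rcases hz with rfl | rfl | rfl | rfl
      · exact Eu (E.mono (by omega))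
      · exact hza rfl
      · exact Eb (E.mono (by omega))
      · exact Ev E
  have hear : ∀ y, G.Adj x y → Ear G S {u, a, b, v} a y 0 := fun y hy =>
    ⟨x, x, {x}, by simpa using hxP, LP.p1, hax, hy⟩
  have hxw : x = w := by
    by_contra hxw
    obtain ⟨y, hy, hxy, hya, hyv⟩ := third (h.deg3 x hx hxu hxv hxw) a v
    have := hall y hy hxy
    simp only [Finset.mem_insert, Finset.mem_singleton] at this
    rcases this with rfl | rfl | rfl | rfl
    · exact Eu (hear _ hxy)
    · exact hya rfl
    · exact Eb (hear _ hxy)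
    · exact hyv rfl
  subst hxw
  exact ⟨hax, (Finset.mem_sdiff.1 hxP).2⟩

theorem lev4 {col : V → Bool} {S : Finset V} {u v w : V} (h : Ctx G col S u v w)
    (hnt : ∃ x ∈ S, x ≠ u ∧ x ≠ v ∧ x ≠ w) : LP G S u v 4 := by
  by_contra hno
  have h3 := lev3 h hnt
  obtain ⟨a, hua, h4⟩ := h3.uncons
  obtain ⟨b, hab, h5⟩ := h4.uncons
  obtain ⟨c, hbc, h6⟩ := h5.uncons
  have hcv : c = v := by
    rcases h6.zero with h7 | h7
    · exact h7
    · exfalso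
      apply hno
      refine LP.cons hua (LP.cons hab (LP.cons hbc h7 (by simp) h5.left (Finset.erase_subset _ _)
        le_rfl) (by simp) h4.left (Finset.erase_subset _ _) le_rfl)
          (by simp) h.hu (Finset.erase_subset _ _) (by omega)
  subst hcv
  have ha := h4.left
  have hb := h5.left
  have hc := h6.left
  simp only [Finset.mem_erase] at ha hb hc
  have p : P3 G S u a b c := ⟨ha.2, hb.2.2, hua, hab, hbc, hb.2.1.symm, Ne.symm hc.2.1⟩
  have hno' : ¬ LP G S c u 4 := fun h => hno h.symm
  have k1 := lev4_claim h hno p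
  have k2 := lev4_claim h.symm hno' p.symm
  by_cases haw : a = w
  · have hbw : b ≠ w := fun hbw => hab.ne (haw.trans hbw.symm)
    have := (k2 hbw).2
    simp [haw] at this
  · have h1 := k1 haw
    have hbw : b ≠ w := by
      rintro rfl
      simp at h1
    have h2 := k2 hbw
    have c1 := h.hcol _ _ h1.1
    have c2 := h.hcol _ _ h2.1
    have c3 := h.hcol _ _ hab
    exact c1 (bool3 c3 c2)

structure P4 (G : SimpleGraph V) (S : Finset V) (u a b c v : V) : Prop where
  ha : a ∈ S
  hb : b ∈ S
  hc : c ∈ S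
  ua : G.Adj u a
  ab : G.Adj a b
  bc : G.Adj b c
  cv : G.Adj c v
  ub : u ≠ b
  uc : u ≠ c
  ac : a ≠ c
  av : a ≠ v
  bv : b ≠ v

theorem P4.symm {S : Finset V} {u a b c v : V} (h : P4 G S u a b c v) : P4 G S v c b a u :=
  ⟨h.hc, h.hb, h.ha, h.cv.symm, h.bc.symm, h.ab.symm, h.ua.symm, h.bv.symm, h.av.symm, h.ac.symm,
    h.uc.symm, h.ub.symm⟩

theorem P4.sub {col : V → Bool} {S : Finset V} {u v w a b c : V} (h : Ctx G col S u v w)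
    (p : P4 G S u a b c v) : ({u, a, b, c, v} : Finset V) ⊆ S := by
  intro y hy
  simp only [Finset.mem_insert, Finset.mem_singleton] at hy
  rcases hy with rfl | rfl | rfl | rfl | rfl
  exacts [h.hu, p.ha, p.hb, p.hc, h.hv]

theorem P4.set {u a b c v : V} : ({v, c, b, a, u} : Finset V) = {u, a, b, c, v} := by
  ext; simp; tauto

theorem Eau {col : V → Bool} {S : Finset V} {u v w a b c : V} (h : Ctx G col S u v w)
    (hno : ¬ LP G S u v 5) (p : P4 G S u a b c v) : ¬ Ear G S {u, a, b, c, v} a u 0 := by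
  intro E
  refine hno (E.symm.ins LP.p1 (LP.p4 p.ab p.bc p.cv p.ac p.av p.bv) (by simp)
    (by intro; simp; tauto) (p.sub h) ?_ (by omega))
  simp [p.ua.ne, p.ub, h.huv, p.uc]

theorem Eab {col : V → Bool} {S : Finset V} {u v w a b c : V} (h : Ctx G col S u v w)
    (hno : ¬ LP G S u v 5) (p : P4 G S u a b c v) : ¬ Ear G S {u, a, b, c, v} a b 0 := by
  intro E
  refine hno (E.ins (LP.p2 p.ua) (LP.p3 p.bc p.cv p.bv) (by intro; simp; tauto)
    (by intro; simp; tauto) (p.sub h) ?_ (by omega))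
  simp [p.ub, h.huv, p.uc, p.ab.ne, p.ac, p.av]

theorem Eac {col : V → Bool} {S : Finset V} {u v w a b c : V} (h : Ctx G col S u v w)
    (hno : ¬ LP G S u v 5) (p : P4 G S u a b c v) : ¬ Ear G S {u, a, b, c, v} a c 1 := by
  intro E
  refine hno (E.ins (LP.p2 p.ua) (LP.p2 p.cv) (by intro; simp; tauto)
    (by intro; simp; tauto) (p.sub h) ?_ (by omega))
  simp [h.huv, p.uc, p.ac, p.av]

theorem Ebu {col : V → Bool} {S : Finset V} {u v w a b c : V} (h : Ctx G col S u v w)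
    (hno : ¬ LP G S u v 5) (p : P4 G S u a b c v) : ¬ Ear G S {u, a, b, c, v} b u 1 := by
  intro E
  refine hno (E.symm.ins LP.p1 (LP.p3 p.bc p.cv p.bv) (by simp)
    (by intro; simp; tauto) (p.sub h) ?_ (by omega))
  simp [h.huv, p.uc, p.ub]

theorem Q1 {col : V → Bool} {S : Finset V} {u v w a b c : V} (h : Ctx G col S u v w)
    (hno : ¬ LP G S u v 5) (p : P4 G S u a b c v) (haw : a ≠ w) :
    G.Adj a v ∨ Ear G S {u, a, b, c, v} a v 1 ∨
      (w ∈ S ∧ w ∉ ({u, a, b, c, v} : Finset V) ∧ G.Adj a w ∧ G.Adj w c) := by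
  obtain ⟨x, hx, hax, hxu, hxb⟩ := third (h.deg3 a p.ha p.ua.ne' p.av haw) u b
  by_cases hxv : x = v
  · subst hxv; exact Or.inl hax
  right
  have c1 := h.hcol _ _ p.ab
  have c2 := h.hcol _ _ p.bc
  have c3 := h.hcol _ _ hax
  have c4 := h.hcol _ _ p.cv
  have hxc : x ≠ c := by rintro rfl; exact c3 (bool3 c1 c2)
  have hxP : x ∈ S \ {u, a, b, c, v} := by simp [hx, hxu, hxv, hax.ne', hxb, hxc]
  have hear : ∀ y, G.Adj x y → Ear G S {u, a, b, c, v} a y 0 := fun y hy =>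
    ⟨x, x, {x}, by simpa using hxP, LP.p1, hax, hy⟩
  rcases EL2 h.ch (by simp) (by simp) hxP hax with h1 | ⟨z, hz, hza, E⟩
  · right
    have hac : ∀ y ∈ S, G.Adj x y → y = a ∨ y = c := by
      intro y hy hxy
      have := h1 y hy hxy
      simp only [Finset.mem_insert, Finset.mem_singleton] at this
      rcases this with rfl | rfl | rfl | rfl | rfl
      · exact absurd (hear _ hxy) (Eau h hno p)
      · exact Or.inl rfl
      · exact absurd (hear _ hxy) (Eab h hno p)
      · exact Or.inr rfl
      · have c5 := h.hcol _ _ hxy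
        exact absurd ((bool3 c3.symm c1).trans (bool3 c2 c4)) c5
    have hxw : x = w := by
      by_contra hxw
      obtain ⟨y, hy, hxy, hya, hyc⟩ := third (h.deg3 x hx hxu hxv hxw) a c
      rcases hac y hy hxy with h | h <;> tauto
    subst hxw
    refine ⟨hx, (Finset.mem_sdiff.1 hxP).2, hax, ?_⟩
    have := h.ch {x} (by simpa using hx) (by simp) (by simpa using Ne.symm hxu)
      (by simpa using Ne.symm hxv) a
    unfold Bd at this
    push Not at this
    obtain ⟨r, hr, y, hy, hry, hyx, hya⟩ := this
    rw [Finset.mem_singleton] at hr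
    subst hr
    rcases hac y hy hry with h | h
    · exact absurd h hya
    · subst h; exact hry
  · left
    simp only [Finset.mem_insert, Finset.mem_singleton] at hz
    rcases hz with rfl | rfl | rfl | rfl | rfl
    · exact absurd (E.mono (by omega)) (Eau h hno p)
    · exact absurd rfl hza
    · exact absurd (E.mono (by omega)) (Eab h hno p)
    · exact absurd E (Eac h hno p)
    · exact E

theorem Qb {col : V → Bool} {S : Finset V} {u v w a b c : V} (h : Ctx G col S u v w)
    (hno : ¬ LP G S u v 5) (p : P4 G S u a b c v) (hbw : b ≠ w) :
    ∃ x ∈ S, x ∉ ({u, a, b, c, v} : Finset V) ∧ G.Adj b x ∧ (x ≠ w → G.Adj x u ∧ G.Adj x v) := by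
  obtain ⟨x, hx, hbx, hxa, hxc⟩ := third (h.deg3 b p.hb p.ub.symm p.bv hbw) a c
  have c0 := h.hcol _ _ p.ua
  have c1 := h.hcol _ _ p.ab
  have c2 := h.hcol _ _ p.bc
  have c3 := h.hcol _ _ hbx
  have c4 := h.hcol _ _ p.cv
  have hxu : x ≠ u := by rintro rfl; exact c3 (bool3 c0 c1).symm
  have hxv : x ≠ v := by rintro rfl; exact c3 (bool3 c2 c4)
  have hno' : ¬ LP G S v u 5 := fun h => hno h.symm
  have hxP : x ∈ S \ {u, a, b, c, v} := by simp [hx, hxu, hxv, hbx.ne', hxa, hxc]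
  refine ⟨x, hx, (Finset.mem_sdiff.1 hxP).2, hbx, fun hxw => ?_⟩
  have hall : ∀ y ∈ S, G.Adj x y → y ∈ ({u, a, b, c, v} : Finset V) := by
    rcases EL2 h.ch (by simp) (by simp) hxP hbx with h1 | ⟨z, hz, hza, E⟩
    · exact h1
    · exfalso
      simp only [Finset.mem_insert, Finset.mem_singleton] at hz
      rcases hz with rfl | rfl | rfl | rfl | rfl
      · exact Ebu h hno p E
      · exact Eab h hno p (E.symm.mono (by omega))
      · exact hza rfl
      · have := Eab h.symm hno' p.symm
        rw [P4.set] at this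
        exact this (E.symm.mono (by omega))
      · have := Ebu h.symm hno' p.symm
        rw [P4.set] at this
        exact this E
  have hd := h.deg3 x hx hxu hxv hxw
  have hc5 : ∀ y ∈ S, G.Adj x y → y = u ∨ y = b ∨ y = v := by
    intro y hy hxy
    have h1 := hall y hy hxy
    have c5 := h.hcol _ _ hxy
    simp only [Finset.mem_insert, Finset.mem_singleton] at h1
    rcases h1 with rfl | rfl | rfl | rfl | rfl
    · simp
    · exact absurd (bool3 c1 c3).symm c5
    · simp
    · exact absurd (bool3 c2.symm c3).symm c5
    · simp
  constructor
  · obtain ⟨y, hy, hxy, h1, h2⟩ := third hd b v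
    rcases hc5 y hy hxy with h | h | h
    · subst h; exact hxy
    · exact absurd h h1
    · exact absurd h h2
  · obtain ⟨y, hy, hxy, h1, h2⟩ := third hd u b
    rcases hc5 y hy hxy with h | h | h
    · exact absurd h h1
    · exact absurd h h2
    · subst h; exact hxy

def K23 (G : SimpleGraph V) : Prop :=
  ∀ a c x y z, a ≠ c → x ≠ y → y ≠ z → x ≠ z → G.Adj a x → G.Adj a y → G.Adj a z →
    G.Adj c x → G.Adj c y → G.Adj c z → False

theorem QC {col : V → Bool} {S : Finset V} {u v w a b c : V} (hk : K23 G) (h : Ctx G col S u v w)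
    (hno : ¬ LP G S u v 5) (p : P4 G S u a b c v) (haw : a ≠ w) (hcw : c ≠ w) : False := by
  have hno' : ¬ LP G S v u 5 := fun h => hno h.symm
  have huv := h.huv
  have q1 := Q1 h hno p haw
  have q2 := Q1 h.symm hno' p.symm hcw
  rw [P4.set] at q2
  have hPS := p.sub h
  by_cases h5 : w ∈ S ∧ w ∉ ({u, a, b, c, v} : Finset V) ∧ G.Adj a w ∧ G.Adj w c
  · obtain ⟨hwS, hwP, haw', hwc⟩ := h5
    have hbw : b ≠ w := by rintro rfl; simp at hwP
    obtain ⟨x, hx, hxP, hbx, hxx⟩ := Qb h hno p hbw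
    have hxw : x ≠ w := by
      rintro rfl
      have c1 := h.hcol _ _ haw'
      have c2 := h.hcol _ _ hbx
      have c3 := h.hcol _ _ p.ab
      exact c1 (bool3 c3 c2)
    obtain ⟨hxu, hxv⟩ := hxx hxw
    simp only [Finset.mem_insert, Finset.mem_singleton, not_or] at hwP hxP
    have l1 := LP.p4 p.bc.symm hbx hxv (Ne.symm hxP.2.2.2.1) p.cv.ne p.bv
    have l2 := LP.p3 p.ua haw' (Ne.symm hwP.1)
    apply hno
    refine l2.join hwc l1 ?_ ?_ ?_ (by omega)
    · intro y; simp only [Finset.mem_insert, Finset.mem_singleton]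
      rintro (rfl | rfl | rfl)
      exacts [h.hu, p.ha, hwS]
    · intro y; simp only [Finset.mem_insert, Finset.mem_singleton]
      rintro (rfl | rfl | rfl | rfl)
      exacts [p.hc, p.hb, hx, h.hv]
    · intro y; simp only [Finset.mem_insert, Finset.mem_singleton]
      have := p.ub; have := p.uc; have := p.ac; have := p.av; have := p.ab.ne
      rintro (rfl | rfl | rfl) <;> grind
  · have q1' : G.Adj a v ∨ Ear G S {u, a, b, c, v} a v 1 := by tauto
    have q2' : G.Adj c u ∨ Ear G S {u, a, b, c, v} c u 1 := by
      rcases q2 with h | h | ⟨h1, h2, h3, h4⟩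
      · exact Or.inl h
      · exact Or.inr h
      · exact absurd ⟨h1, h2, h4.symm, h3.symm⟩ h5
    have d1 := p.ub; have d2 := p.uc; have d3 := p.ac; have d4 := p.av; have d5 := p.bv
    have d6 := p.ab.ne; have d7 := p.bc.ne; have d8 := p.ua.ne; have d9 := p.cv.ne
    rcases q1' with h1 | h1 <;> rcases q2' with h2 | h2
    · exact hk a c u b v p.ac p.ub p.bv huv p.ua.symm p.ab h1 h2 p.bc.symm p.cv
    · refine hno (h2.symm.ins LP.p1 (LP.p4 p.bc.symm p.ab.symm h1 d3.symm d9 d5) (by simp)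
        (by clear * -; intro y hy; simp only [Finset.mem_insert, Finset.mem_singleton] at hy ⊢; tauto) hPS ?_ (by omega))
      clear * - huv d1 d2 d3 d4 d5 d6 d7 d8 d9
      simp only [Finset.mem_insert, Finset.mem_singleton]
      grind
    · refine hno (h1.ins (LP.p4 h2.symm p.bc.symm p.ab.symm d1 d8 d3.symm) LP.p1
        (by clear * -; intro y hy; simp only [Finset.mem_insert, Finset.mem_singleton] at hy ⊢; tauto) (by simp) hPS ?_ (by omega))
      clear * - huv d1 d2 d3 d4 d5 d6 d7 d8 d9
      simp only [Finset.mem_insert, Finset.mem_singleton]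
      grind
    · obtain ⟨x1, y1, A1, hA1, l1, a1, b1⟩ := h1
      obtain ⟨x2, y2, A2, hA2, l2, a2, b2⟩ := h2
      set P : Finset V := {u, a, b, c, v} with hP
      set R1 := reach G (S \ P) x1 with hR1
      set R2 := reach G (S \ P) x2 with hR2
      have hR1s : R1 ⊆ S \ P := reach_sub
      have hR2s : R2 ⊆ S \ P := reach_sub
      have l1' : LP G R1 x1 y1 1 := ((l1.mono hA1 le_rfl).trap (reach_self (hA1 l1.left))
        reach_closed).mono Finset.inter_subset_right le_rfl
      have l2' : LP G R2 x2 y2 1 := ((l2.mono hA2 le_rfl).trap (reach_self (hA2 l2.left))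
        reach_closed).mono Finset.inter_subset_right le_rfl
      by_cases hd : ∃ z ∈ R1, z ∈ R2
      · obtain ⟨z, hz1, hz2⟩ := hd
        have l3 : LP G (S \ P) x1 x2 0 := (mem_reach.1 hz1).trans (mem_reach.1 hz2).symm
        exact Eau h hno p ⟨x1, y2, S \ P, subset_rfl, l3.trans (l2.mono hA2 le_rfl), a1, b2⟩
      · push Not at hd
        have l4 : LP G ({c, b, a} ∪ R1) c y1 4 := by
          refine (LP.p3 p.bc.symm p.ab.symm d3.symm).join a1 l1' Finset.subset_union_left
            Finset.subset_union_right ?_ (by omega)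
          intro y hy hy'
          refine (Finset.mem_sdiff.1 (hR1s hy')).2 ?_
          clear * - hy hP; rw [hP]
          simp only [Finset.mem_insert, Finset.mem_singleton] at hy ⊢; tauto
        have l5 : LP G ({c, b, a} ∪ R1 ∪ {v}) c v 5 := by
          refine l4.join b1 LP.p1 Finset.subset_union_left Finset.subset_union_right ?_ (by omega)
          intro y hy hy'
          rw [Finset.mem_singleton] at hy'
          subst hy'
          rcases Finset.mem_union.1 hy with h | h
          · clear * - h d4 d5 d9
            simp only [Finset.mem_insert, Finset.mem_singleton] at h; grind
          · refine (Finset.mem_sdiff.1 (hR1s h)).2 (by simp [hP])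
        have l6 : LP G ({u} ∪ R2) u x2 0 := by
          refine LP.p1.join b2.symm l2'.symm Finset.subset_union_left
            Finset.subset_union_right ?_ (by omega)
          intro y hy hy'
          refine (Finset.mem_sdiff.1 (hR2s hy')).2 ?_
          clear * - hy hP; rw [hP]
          simp only [Finset.mem_insert, Finset.mem_singleton] at hy ⊢; tauto
        refine hno (l6.join a2.symm l5 ?_ ?_ ?_ (by omega))
        · exact Finset.union_subset (by simpa using h.hu) (hR2s.trans Finset.sdiff_subset)
        · refine Finset.union_subset (Finset.union_subset ?_ (hR1s.trans Finset.sdiff_subset))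
            (by simpa using h.hv)
          refine Finset.Subset.trans ?_ hPS
          clear * - hP; rw [hP]; intro y hy
          simp only [Finset.mem_insert, Finset.mem_singleton] at hy ⊢; tauto
        · intro y hy hy'
          have hyP : y ∈ P ∨ y ∈ R1 := by
            clear * - hy' hP; rw [hP]
            simp only [Finset.mem_union, Finset.mem_insert, Finset.mem_singleton] at hy' ⊢; tauto
          rcases Finset.mem_union.1 hy with hy | hy
          · rw [Finset.mem_singleton] at hy
            subst hy
            have : y ∉ R1 := fun hh => (Finset.mem_sdiff.1 (hR1s hh)).2 (by simp [hP])
            clear * - hy' this d1 d2 d8 huv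
            simp only [Finset.mem_union, Finset.mem_insert, Finset.mem_singleton] at hy'; grind
          · rcases hyP with h | h
            · exact (Finset.mem_sdiff.1 (hR2s hy)).2 h
            · exact hd y h hy

theorem lev5 {col : V → Bool} {S : Finset V} {u v w : V} (hk : K23 G) (h : Ctx G col S u v w)
    (hnt : ∃ x ∈ S, x ≠ u ∧ x ≠ v ∧ x ≠ w) : LP G S u v 5 := by
  by_contra hno
  have hno' : ¬ LP G S v u 5 := fun h => hno h.symm
  have h3 := lev4 h hnt
  obtain ⟨a, hua, h4⟩ := h3.uncons
  obtain ⟨b, hab, h5⟩ := h4.uncons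
  obtain ⟨c, hbc, h6⟩ := h5.uncons
  obtain ⟨d, hcd, h7⟩ := h6.uncons
  have hcv : d = v := by
    rcases h7.zero with h8 | h8
    · exact h8
    · exfalso
      apply hno
      refine LP.cons hua (LP.cons hab (LP.cons hbc (LP.cons hcd h8 (by simp) h6.left
        (Finset.erase_subset _ _) le_rfl) (by simp) h5.left (Finset.erase_subset _ _)
        le_rfl) (by simp) h4.left (Finset.erase_subset _ _) le_rfl)
          (by simp) h.hu (Finset.erase_subset _ _) (by omega)
  subst hcv
  have ha := h4.left
  have hb := h5.left
  have hc := h6.left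
  have hd := h7.left
  simp only [Finset.mem_erase] at ha hb hc hd
  have p : P4 G S u a b c d := ⟨ha.2, hb.2.2, hc.2.2.2, hua, hab, hbc, hcd, hb.2.1.symm,
    hc.2.2.1.symm, hc.2.1.symm, Ne.symm hd.2.2.1, Ne.symm hd.2.1⟩
  by_cases haw : a = w
  · subst haw
    obtain ⟨x, hx, hxP, hbx, hxx⟩ := Qb h hno p hab.ne'
    simp only [Finset.mem_insert, Finset.mem_singleton, not_or] at hxP
    obtain ⟨hxu, hxd⟩ := hxx hxP.2.1
    exact QC hk h hno (a := x) (b := b) (c := c) ⟨hx, p.hb, p.hc, hxu.symm, hbx.symm, hbc, hcd,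
      p.ub, p.uc, hxP.2.2.2.1, hxP.2.2.2.2, p.bv⟩ hxP.2.1 p.ac.symm
  by_cases hcw : c = w
  · subst hcw
    obtain ⟨x, hx, hxP, hbx, hxx⟩ := Qb h hno p hbc.ne
    simp only [Finset.mem_insert, Finset.mem_singleton, not_or] at hxP
    obtain ⟨hxu, hxd⟩ := hxx hxP.2.2.2.1
    exact QC hk h hno (a := a) (b := b) (c := x) ⟨p.ha, p.hb, hx, hua, hab, hbx, hxd,
      p.ub, Ne.symm hxP.1, Ne.symm hxP.2.1, p.av, p.bv⟩ p.ac hxP.2.2.2.1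
  exact QC hk h hno p haw hcw

theorem D3_three {col : V → Bool} (hk : K23 G) (hcol : ∀ x y, G.Adj x y → col x ≠ col y) (N : ℕ) :
    D3 G 3 N := by
  intro S _ u v w hu hv huv hCH hdeg hnt
  exact lev5 hk ⟨hu, hv, huv, hCH, hdeg, hcol⟩ hnt

theorem D3_all {col : V → Bool} (hk : K23 G) (hcol : ∀ x y, G.Adj x y → col x ≠ col y)
    (hmc : MC G) {e : ℕ} (he : 2 ≤ e) : ∀ N, D3 G e N := by
  rcases Nat.lt_or_ge e 3 with h | h
  · have : e = 2 := by omega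
    subst this
    exact D3_two
  · induction e, h using Nat.le_induction with
    | base => exact D3_three hk hcol
    | succ n hn ih => exact D3_succ hmc hn (ih (by omega))

end HC

namespace HC
open Classical
variable {V : Type*} {G : SimpleGraph V}

theorem exists_third {S : Finset V} (h : 3 ≤ S.card) (u v : V) : ∃ x ∈ S, x ≠ u ∧ x ≠ v ∧ x ≠ u := by
  have h2 : ({u, v} : Finset V).card < S.card := lt_of_le_of_lt Finset.card_le_two h
  obtain ⟨x, hx, hx'⟩ := Finset.exists_mem_notMem_of_card_lt_card h2
  simp only [Finset.mem_insert, Finset.mem_singleton, not_or] at hx'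
  exact ⟨x, hx, hx'.1, hx'.2, hx'.1⟩

theorem mindeg_path {e : ℕ} (hD : ∀ N, D3 G e N) (he : 2 ≤ e) {T : Finset V} (hT : T.Nonempty)
    (hdeg : ∀ x ∈ T, e ≤ deg G T x) : ∃ u v, LP G T u v (f e) := by
  have hex : ∃ k, ∃ I ⊆ T, I.Nonempty ∧ (∃ c, Bd G T I c) ∧ I.card = k :=
    ⟨_, T, subset_rfl, hT, ⟨hT.choose, fun _ _ x hx _ => Or.inl hx⟩, rfl⟩
  obtain ⟨I, hIT, hIne, ⟨c, hc⟩, hcard⟩ := Nat.find_spec hex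
  have hmin : ∀ M ⊆ I, M.Nonempty → ∀ c', Bd G T M c' → M = I := by
    intro J hJ h2 c' h3
    refine Finset.eq_of_subset_of_card_le hJ ?_
    rw [hcard]
    exact Nat.find_min' hex ⟨J, hJ.trans hIT, h2, ⟨c', h3⟩, rfl⟩
  by_cases hA : ∃ m ∈ I, ∃ x ∈ T, x ∉ I ∧ G.Adj m x
  · obtain ⟨m, hm, x, hx, hxI, hmx⟩ := hA
    have hxc : x = c := (hc m hm x hx hmx).resolve_left hxI
    subst hxc
    have L : Leaf G T x x I := ⟨hIT, hIne, hxI, hx, hxI, hc, hmin⟩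
    have hmS : m ∈ insert x I := Finset.mem_insert_of_mem hm
    have h1 := (hdeg m (hIT hm)).trans (L.deg hm)
    have h2 := deg_card (G := G) hmS
    refine ⟨x, m, (hD _ (insert x I) (Nat.lt_succ_self _) x m x (Finset.mem_insert_self _ _) hmS
      hmx.ne.symm (L.CH1 hm) ?_ (exists_third (by omega) _ _)).mono L.insert_sub le_rfl⟩
    intro y hy hyx _ _
    have hyI := (Finset.mem_insert.1 hy).resolve_left hyx
    exact (hdeg y (hIT hyI)).trans (L.deg hyI)
  · push Not at hA
    have hA' : ∀ m ∈ I, ∀ x ∈ T, G.Adj m x → x ∈ I := by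
      intro m hm x hx hmx
      by_contra h
      exact hA m hm x hx h hmx
    have hdI : ∀ x ∈ I, e ≤ deg G I x := by
      intro x hx
      refine (hdeg x (hIT hx)).trans (Finset.card_le_card ?_)
      intro y hy
      rw [Finset.mem_filter] at hy ⊢
      exact ⟨hA' x hx y hy.1 hy.2, hy.2⟩
    obtain ⟨u, hu⟩ := hIne
    have h1 := hdI u hu
    have h2 := deg_card (G := G) hu
    obtain ⟨v, hv, hvu, -⟩ := exists_third (S := I) (by omega) u u
    refine ⟨u, v, (hD _ I (Nat.lt_succ_self _) u v u hu hv hvu.symm ?_ (fun x hx _ _ _ => hdI x hx)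
      (exists_third (by omega) _ _)).mono hIT le_rfl⟩
    intro M hM hMne huM _ c' hb
    have := hmin M hM hMne c' (fun m hm x hx ha => hb m hm x (hA' m (hM hm) x hx ha) ha)
    rw [this] at huM
    exact huM hu

theorem sum_erase {T : Finset V} {x : V} (hx : x ∈ T) :
    ∑ y ∈ T, deg G T y = ∑ y ∈ T.erase x, deg G (T.erase x) y + 2 * deg G T x := by
  have h1 : ∀ y ∈ T.erase x, deg G T y = deg G (T.erase x) y + if G.Adj x y then 1 else 0 := by
    intro y hy
    unfold deg
    conv_lhs => rw [← Finset.insert_erase hx]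
    rw [Finset.filter_insert]
    by_cases h : G.Adj x y
    · rw [if_pos h.symm, if_pos h, Finset.card_insert_of_notMem (by simp)]
    · rw [if_neg (fun h' => h h'.symm), if_neg h, Nat.add_zero]
  rw [← Finset.add_sum_erase T _ hx, Finset.sum_congr rfl h1, Finset.sum_add_distrib,
    ← Finset.card_filter]
  have h2 : (T.erase x).filter (fun y => G.Adj x y) = T.filter (G.Adj x) := by
    ext y
    simp only [Finset.mem_filter, Finset.mem_erase]
    constructor
    · rintro ⟨⟨_, h⟩, h'⟩; exact ⟨h, h'⟩
    · rintro ⟨h, h'⟩; exact ⟨⟨h'.ne.symm, h⟩, h'⟩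
  rw [h2]
  unfold deg
  omega

theorem dense_sub {d : ℕ} (hd : 1 ≤ d) {T0 : Finset V} (hT0 : T0.Nonempty)
    (h0 : d * T0.card ≤ ∑ x ∈ T0, deg G T0 x) :
    ∃ T : Finset V, T.Nonempty ∧ ∀ x ∈ T, d / 2 + 1 ≤ deg G T x := by
  have hex : ∃ k, ∃ T : Finset V, T.Nonempty ∧ d * T.card ≤ ∑ x ∈ T, deg G T x ∧ T.card = k :=
    ⟨_, T0, hT0, h0, rfl⟩
  obtain ⟨T, hT, hs, hcard⟩ := Nat.find_spec hex
  refine ⟨T, hT, fun x hx => ?_⟩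
  by_contra hlt
  have hlt' : 2 * deg G T x ≤ d := by omega
  have h1 := sum_erase (G := G) hx
  have h2 := Finset.card_erase_add_one hx
  have h3 : d * T.card = d * (T.erase x).card + d := by rw [← h2, Nat.mul_succ]
  rcases (T.erase x).eq_empty_or_nonempty with h4 | h4
  · have : T = {x} := by
      rw [← Finset.insert_erase hx, h4]; rfl
    subst this
    rw [Finset.sum_singleton] at hs
    have := deg_card (G := G) hx
    simp only [Finset.card_singleton] at this hs
    omega
  · have := Nat.find_min' hex ⟨T.erase x, h4, by omega, rfl⟩
    omega

theorem f_real {d : ℕ} (hd : 2 ≤ d) : (2 : ℝ) ^ ((d : ℝ) / 2) - 1 ≤ (f (d / 2 + 1) : ℝ) := by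
  obtain ⟨k, hk⟩ : ∃ k, d / 2 = k + 1 := ⟨d / 2 - 1, by omega⟩
  have hf : (f (d / 2 + 1) : ℝ) = 3 * 2 ^ k - 1 := by
    rw [hk]
    have h : f (k + 1 + 1) + 1 = 3 * 2 ^ k := by
      unfold f
      have : 0 < 2 ^ k := by positivity
      have e : k + 1 + 1 - 2 = k := by omega
      rw [e]; omega
    have h' : ((f (k + 1 + 1) + 1 : ℕ) : ℝ) = ((3 * 2 ^ k : ℕ) : ℝ) := by rw [h]
    push_cast at h'
    linarith
  rw [hf]
  have h1 : (d : ℝ) / 2 ≤ (k : ℝ) + 1 + 1 / 2 := by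
    have : d ≤ 2 * k + 3 := by omega
    have : (d : ℝ) ≤ 2 * k + 3 := by exact_mod_cast this
    linarith
  have h2 : (2 : ℝ) ^ ((d : ℝ) / 2) ≤ 2 ^ ((k : ℝ) + 1 + 1 / 2) :=
    Real.rpow_le_rpow_of_exponent_le (by norm_num) h1
  have h3 : (2 : ℝ) ^ ((k : ℝ) + 1 + 1 / 2) = 2 ^ k * 2 * √2 := by
    rw [Real.rpow_add (by norm_num), Real.rpow_add (by norm_num), Real.rpow_natCast,
      Real.rpow_one, Real.sqrt_eq_rpow]
  have h4 : √2 ≤ (3 : ℝ) / 2 := by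
    rw [Real.sqrt_le_left (by norm_num)]; norm_num
  have h5 : (0 : ℝ) < 2 ^ k := by positivity
  rw [h3] at h2
  nlinarith

theorem main_abs [Fintype V] {col : V → Bool} (hk : K23 G)
    (hcol : ∀ x y, G.Adj x y → col x ≠ col y) (hmc : MC G) (d : ℕ) (hne : Nonempty V)
    (h : d * Fintype.card V ≤ ∑ x, deg G Finset.univ x) :
    ∃ (u v : V) (p : G.Walk u v), p.IsPath ∧ (2 : ℝ) ^ ((d : ℝ) / 2) - 1 ≤ (p.length : ℝ) := by
  rcases Nat.eq_zero_or_pos d with rfl | hd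
  · obtain ⟨x⟩ := hne
    exact ⟨x, x, SimpleGraph.Walk.nil, by simp, by simp⟩
  obtain ⟨T, hT, hTd⟩ := dense_sub (G := G) hd (T0 := Finset.univ) Finset.univ_nonempty
    (by simpa using h)
  by_cases h2 : 2 ≤ d
  · obtain ⟨u, v, p, hp, -, hl⟩ := mindeg_path (D3_all hk hcol hmc (e := d / 2 + 1) (by omega))
      (by omega) hT hTd
    exact ⟨u, v, p, hp, (f_real h2).trans (by exact_mod_cast hl)⟩
  · have : d = 1 := by omega
    subst this
    obtain ⟨x, hx⟩ := hT
    have h3 : 0 < deg G T x := by have := hTd x hx; omega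
    obtain ⟨y, hy⟩ := Finset.card_pos.1 h3
    have hxy := (Finset.mem_filter.1 hy).2
    refine ⟨x, y, hxy.toWalk, by simp [hxy.ne], ?_⟩
    have : (2 : ℝ) ^ (((1 : ℕ) : ℝ) / 2) ≤ 2 ^ (1 : ℝ) :=
      Real.rpow_le_rpow_of_exponent_le (by norm_num) (by norm_num)
    rw [Real.rpow_one] at this
    simp only [SimpleGraph.Walk.length_cons, SimpleGraph.Walk.length_nil, SimpleGraph.Adj.toWalk]
    push_cast at this ⊢
    linarith
end HC

namespace HC
open Classical
variable {V : Type*} {G : SimpleGraph V}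

theorem K23_of_MC (h : MC G) : K23 G := by
  intro a c x y z hac hxy hyz hxz ax ay az cx cy cz
  obtain ⟨side, hs, hu⟩ := h a c hac
  have key : ∀ t, side t ≠ side a ∨ side t ≠ side c := by
    intro t
    by_contra hh
    push Not at hh
    exact hs (hh.1.symm.trans hh.2)
  have p1 := hu a x y ax ay
  have p2 := hu a x z ax az
  have p3 := hu a y z ay az
  have q1 := hu c x y cx cy
  have q2 := hu c x z cx cz
  have q3 := hu c y z cy cz
  rcases key x with h1 | h1 <;> rcases key y with h2 | h2 <;> rcases key z with h3 | h3
  · exact hxy (p1 h1 h2)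
  · exact hxy (p1 h1 h2)
  · exact hxz (p2 h1 h3)
  · exact hyz (q3 h2 h3)
  · exact hyz (p3 h2 h3)
  · exact hxz (q2 h1 h3)
  · exact hxy (q1 h1 h2)
  · exact hxy (q1 h1 h2)

theorem cube_adj {n : ℕ} {x y : Fin n → Bool} (h : (hypercube n).Adj x y) :
    ∃ i, y = Function.update x i (!x i) := by
  have h1 : hammingDist x y = 1 := by
    rcases h with ⟨_, h | h⟩
    · exact h
    · rw [hammingDist_comm]; exact h
  obtain ⟨i, hi⟩ := Finset.card_eq_one.1 h1
  refine ⟨i, ?_⟩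
  funext j
  have hj : x j ≠ y j ↔ j = i := by
    have := Finset.ext_iff.1 hi j
    simpa using this
  by_cases hji : j = i
  · subst hji
    have h2 := hj.2 rfl
    rw [Function.update_self]
    revert h2
    cases x j <;> cases y j <;> simp
  · rw [Function.update_of_ne hji]
    by_contra h3
    exact hji (hj.1 (Ne.symm h3))

theorem cube_MC {n : ℕ} : MC (hypercube n) := by
  intro u v huv
  obtain ⟨i, hi⟩ := Function.ne_iff.1 huv
  refine ⟨fun x => x i, hi, ?_⟩
  intro x y y' h h' hy hy'
  obtain ⟨j, rfl⟩ := cube_adj h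
  obtain ⟨k, rfl⟩ := cube_adj h'
  have hj : i = j := by
    by_contra hh
    exact hy (Function.update_of_ne hh _ _)
  have hk : i = k := by
    by_contra hh
    exact hy' (Function.update_of_ne hh _ _)
  subst hj; subst hk; rfl

noncomputable def par {n : ℕ} (x : Fin n → Bool) : Bool :=
  decide ((∑ i, if x i then (1 : ZMod 2) else 0) = 0)

theorem cube_col {n : ℕ} (x y : Fin n → Bool) (h : (hypercube n).Adj x y) : par x ≠ par y := by
  obtain ⟨i, rfl⟩ := cube_adj h
  have h1 : (∑ j, if Function.update x i (!x i) j then (1 : ZMod 2) else 0)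
      = (∑ j, if x j then (1 : ZMod 2) else 0) + 1 := by
    rw [← Finset.add_sum_erase _ _ (Finset.mem_univ i),
      ← Finset.add_sum_erase (f := fun j => if x j then (1 : ZMod 2) else 0) _ (Finset.mem_univ i)]
    have h2 : ∑ j ∈ Finset.univ.erase i, (if Function.update x i (!x i) j then (1 : ZMod 2) else 0)
        = ∑ j ∈ Finset.univ.erase i, if x j then (1 : ZMod 2) else 0 := by
      refine Finset.sum_congr rfl ?_
      intro j hj
      rw [Function.update_of_ne (Finset.ne_of_mem_erase hj)]
    rw [h2, Function.update_self]
    have h3 : (1 : ZMod 2) + 1 = 0 := by decide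
    cases x i
    · simp; ring
    · simp only [Bool.not_true, Bool.false_eq_true, if_false, if_true]
      linear_combination -h3
  unfold par
  rw [h1]
  generalize (∑ j, if x j then (1 : ZMod 2) else 0) = s
  have : ∀ s : ZMod 2, (s = 0) ↔ ¬ (s + 1 = 0) := by decide
  intro hh
  rw [decide_eq_decide] at hh
  have := this s
  tauto

end HC

theorem hypercube_avgDegree_long_path (n d : ℕ) (G : (hypercube n).Subgraph)
    (hne : G.verts.Nonempty)
    (havg : d * G.verts.ncard ≤ 2 * G.edgeSet.ncard) :
    ∃ (u v : G.verts) (p : G.coe.Walk u v), p.IsPath ∧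
      (2 : ℝ) ^ ((d : ℝ) / 2) - 1 ≤ (p.length : ℝ) := by
  classical
  have hmc : HC.MC G.coe := by
    intro u v huv
    obtain ⟨side, h1, h2⟩ := HC.cube_MC (u : Fin n → Bool) v (fun h => huv (Subtype.ext h))
    exact ⟨fun x => side x, h1, fun x y y' h h' hy hy' =>
      Subtype.ext (h2 x y y' (G.adj_sub h) (G.adj_sub h') hy hy')⟩
  refine HC.main_abs (G := G.coe) (col := fun x => HC.par (x : Fin n → Bool)) (HC.K23_of_MC hmc)
    (fun x y h => HC.cube_col _ _ (G.adj_sub h)) hmc d hne.to_subtype ?_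
  have h1 : Fintype.card G.verts = G.verts.ncard := by
    rw [← Nat.card_eq_fintype_card]; rfl
  have h2 : G.edgeSet.ncard = G.coe.edgeFinset.card := by
    rw [← G.image_coe_edgeSet_coe,
      Set.ncard_image_of_injective _ (Sym2.map.injective Subtype.val_injective),
      ← Set.ncard_coe_finset, SimpleGraph.coe_edgeFinset]
  have h3 : ∑ x, HC.deg G.coe Finset.univ x = 2 * G.edgeSet.ncard := by
    rw [h2, ← G.coe.sum_degrees_eq_twice_card_edges]
    refine Finset.sum_congr rfl fun x _ => ?_
    rw [← SimpleGraph.card_neighborFinset_eq_degree]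
    unfold HC.deg
    congr 1
    ext y
    simp
  rw [h1, h3]
  exact havg
end
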